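/- arXiv:2303.10744 — 3 statements merged into one kernel-verified Lean document; each statement's English description precedes it below -/
import Mathlib

section
/- Let E be a directed graph with E^0 finite and K a field, and assume the Leavitt path algebra L_K(E) is 6-torsion-free, i.e., for each x ∈ L_K(E), 6x = 0 implies x = 0. If G is a solvable normal subgroup of the unit group L_K(E)^×, then G is contained in the center of L_K(E). -/
/-!
The theorem is deduced from a statement on rings, `solvable_normal_central`. Let `R` be a ring
without 6-torsion that is semiprime (`x R x = 0` implies `x = 0`) and commutative modulo the ideal
`I` generated by the corners `p R (1 - p)`, `p` idempotent. Then every solvable normal subgroup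
`G` of `Rˣ` is central in `R`.

To see this, climb the derived series of `G`. If a term is central, then the preceding term `N` is
normal in `Rˣ` and its commutators are central. For `a ∈ N` and `x² = 0`, the commutator of `a`
with its conjugate by `1 + t x` is a polynomial of degree four in the integer `t` with central
values. Its coefficients of degree one and two are then central, since the Vandermonde determinant
needed involves only the primes 2 and 3, and in a semiprime ring this forces the second commutator
`[a, [a, x]]` to vanish (`second_commutator_eq_zero`). Applied to the square-zero elements
`x = p y (1 - p)`, this gives `(1 - p) a p = 0`, so that `a` commutes with all idempotents
(`commute_idempotent`). Hence `a` commutes with `I`, so `[a, y]` annihilates `I` for each `y`. As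
`[a, y] ∈ I`, semiprimeness gives `[a, y] = 0` (`central_of_commute_idempotent`).

It remains to verify the two hypotheses for a Leavitt path algebra `L`.

* Modulo `I` all idempotents are central. This kills the edges that are not loops, makes `e e^*`
  equal to `e^* e` for a loop `e`, and therefore kills any other loop at the same vertex. So the
  generators commute modulo `I` (`LeavittFamily.bracket_mem`).
* `L` is semiprime (`LeavittFamily.semiprime`). The `ℤ`-grading, encoded as a homomorphism to
  Laurent polynomials over `L`, reduces this to homogeneous elements, which are handled by induction
  on the length of the ghost parts of their monomials (`LeavittFamily.eq_zero_of_mem_filt`). The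
  vertices are nonzero because `L` acts on the functions on a branching system
  (`LPA.vtx_ne_zero`).
-/

noncomputable section
open scoped Classical
universe u

/-- `a` and `b` generate a free group of rank two, i.e. form a non-cyclic free subgroup. -/
def FreePair {G : Type*} [Group G] (a b : G) : Prop :=
  Function.Injective (FreeGroup.lift ![a, b] : FreeGroup (Fin 2) →* G)

/-- A field is absolute (locally finite) if every finite subset generates a finite
subfield over the prime subfield. -/
def IsAbsoluteField (K : Type*) [Field K] : Prop :=
  ∀ S : Finset K, ((Subfield.closure (S : Set K) : Subfield K) : Set K).Finite

/-- `a` is transcendental over the prime subfield of `K`. -/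
def TranscendentalOverPrime (K : Type*) [Field K] (a : K) : Prop :=
  ∀ p : Polynomial ℤ, Polynomial.aeval a p = 0 → p.map (Int.castRingHom K) = 0

/-- `a` and `b` are algebraically independent over the prime subfield of `K`. -/
def AlgIndepOverPrime (K : Type*) [Field K] (a b : K) : Prop :=
  ∀ p : MvPolynomial (Fin 2) ℤ, MvPolynomial.aeval ![a, b] p = 0 →
    MvPolynomial.map (Int.castRingHom K) p = 0

/-- A two-sided ideal is (left) primitive if it is the annihilator of a simple left module. -/
def IsPrimitiveIdeal {R : Type u} [Ring R] (P : TwoSidedIdeal R) : Prop :=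
  ∃ (M : Type u) (_ : AddCommGroup M) (_ : Module R M),
    IsSimpleModule R M ∧ ∀ x : R, x ∈ P ↔ ∀ m : M, x • m = 0

namespace LPA

/-- Generators of Cohn/Leavitt path algebras: vertices, edges and ghost edges. -/
inductive Gen (V : Type*) (E : Type*)
  | vertex : V → Gen V E
  | edge : E → Gen V E
  | ghost : E → Gen V E

section rels

variable (K : Type*) [Field K] {V E : Type*} (s r : E → V)

/-- The defining relations (V), (E1), (E2), (CK1) of the Cohn path algebra of the graph
with vertex set `V`, edge set `E`, source map `s` and range map `r`; together with the
identification of `1` with the sum of all vertices when the vertex set is finite. -/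
inductive CohnRel : FreeAlgebra K (Gen V E) → FreeAlgebra K (Gen V E) → Prop
  | vtx_mul (v w : V) :
      CohnRel (FreeAlgebra.ι K (Gen.vertex v) * FreeAlgebra.ι K (Gen.vertex w))
        (if v = w then FreeAlgebra.ι K (Gen.vertex v) else 0)
  | edge_src (e : E) :
      CohnRel (FreeAlgebra.ι K (Gen.vertex (s e)) * FreeAlgebra.ι K (Gen.edge e))
        (FreeAlgebra.ι K (Gen.edge e))
  | edge_rng (e : E) :
      CohnRel (FreeAlgebra.ι K (Gen.edge e) * FreeAlgebra.ι K (Gen.vertex (r e)))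
        (FreeAlgebra.ι K (Gen.edge e))
  | ghost_rng (e : E) :
      CohnRel (FreeAlgebra.ι K (Gen.vertex (r e)) * FreeAlgebra.ι K (Gen.ghost e))
        (FreeAlgebra.ι K (Gen.ghost e))
  | ghost_src (e : E) :
      CohnRel (FreeAlgebra.ι K (Gen.ghost e) * FreeAlgebra.ι K (Gen.vertex (s e)))
        (FreeAlgebra.ι K (Gen.ghost e))
  | ck1 (e f : E) :
      CohnRel (FreeAlgebra.ι K (Gen.ghost e) * FreeAlgebra.ι K (Gen.edge f))
        (if e = f then FreeAlgebra.ι K (Gen.vertex (r e)) else 0)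
  | unit [Fintype V] :
      CohnRel (1 : FreeAlgebra K (Gen V E)) (∑ v : V, FreeAlgebra.ι K (Gen.vertex v))

/-- The defining relations of the Leavitt path algebra: those of the Cohn path algebra
together with the (CK2) relations at every regular vertex. -/
inductive LeavittRel : FreeAlgebra K (Gen V E) → FreeAlgebra K (Gen V E) → Prop
  | cohn {a b : FreeAlgebra K (Gen V E)} : CohnRel K s r a b → LeavittRel a b
  | ck2 (v : V) (hfin : {e : E | s e = v}.Finite) (hne : {e : E | s e = v}.Nonempty) :
      LeavittRel (FreeAlgebra.ι K (Gen.vertex v))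
        (∑ e ∈ hfin.toFinset, FreeAlgebra.ι K (Gen.edge e) * FreeAlgebra.ι K (Gen.ghost e))

/-- The Cohn path algebra of the graph `(V, E, s, r)` with coefficients in `K`. -/
abbrev CohnPathAlgebra := RingQuot (CohnRel K s r)

/-- The Leavitt path algebra of the graph `(V, E, s, r)` with coefficients in `K`. -/
abbrev LeavittPathAlgebra := RingQuot (LeavittRel K s r)

/-- The image of a vertex in the Leavitt path algebra. -/
def vtx (v : V) : LeavittPathAlgebra K s r :=
  RingQuot.mkAlgHom K (LeavittRel K s r) (FreeAlgebra.ι K (Gen.vertex v))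

/-- The image of an edge in the Leavitt path algebra. -/
def edg (e : E) : LeavittPathAlgebra K s r :=
  RingQuot.mkAlgHom K (LeavittRel K s r) (FreeAlgebra.ι K (Gen.edge e))

/-- The image of a ghost edge in the Leavitt path algebra. -/
def gh (e : E) : LeavittPathAlgebra K s r :=
  RingQuot.mkAlgHom K (LeavittRel K s r) (FreeAlgebra.ι K (Gen.ghost e))

end rels

section graph

variable {V E : Type*}

/-- `u ≥ v` : there is a (finite, possibly trivial) path from `u` to `v`. -/
def Reaches (s r : E → V) (u v : V) : Prop :=
  Relation.ReflTransGen (fun a b => ∃ e : E, s e = a ∧ r e = b) u v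

/-- A sink emits no edges. -/
def IsSink (s : E → V) (v : V) : Prop := ∀ e : E, s e ≠ v

/-- An infinite emitter emits infinitely many edges. -/
def IsInfiniteEmitter (s : E → V) (v : V) : Prop := {e : E | s e = v}.Infinite

/-- A regular vertex is neither a sink nor an infinite emitter. -/
def IsRegular (s : E → V) (v : V) : Prop :=
  (∃ e : E, s e = v) ∧ {e : E | s e = v}.Finite

/-- Hereditary subsets of vertices. -/
def IsHereditary (s r : E → V) (H : Set V) : Prop :=
  ∀ u ∈ H, ∀ v : V, Reaches s r u v → v ∈ H

/-- Saturated subsets of vertices. -/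
def IsSaturated (s r : E → V) (H : Set V) : Prop :=
  ∀ v : V, IsRegular s v → (∀ e : E, s e = v → r e ∈ H) → v ∈ H

/-- A breaking vertex of a hereditary saturated set `H`. -/
def IsBreakingVertex (s r : E → V) (H : Set V) (w : V) : Prop :=
  w ∉ H ∧ IsInfiniteEmitter s w ∧
    {e : E | s e = w ∧ r e ∉ H}.Finite ∧ {e : E | s e = w ∧ r e ∉ H}.Nonempty

/-- An infinite path, as a sequence of composable edges. -/
def IsInfPath (s r : E → V) (p : ℕ → E) : Prop := ∀ i, r (p i) = s (p (i + 1))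

/-- Tail equivalence of infinite paths. -/
def TailEquiv (p q : ℕ → E) : Prop := ∃ m n : ℕ, ∀ i, p (m + i) = q (n + i)

/-- Prepending an edge to an infinite path. -/
def consPath (f : E) (p : ℕ → E) : ℕ → E := fun i =>
  match i with
  | 0 => f
  | (j + 1) => p j

/-- A cycle of length `m`, encoded as the `m`-periodic infinite path obtained by
traversing it repeatedly; the sources of its first `m` edges are pairwise distinct. -/
def IsCycle (s r : E → V) (m : ℕ) (c : ℕ → E) : Prop :=
  0 < m ∧ IsInfPath s r c ∧ (∀ i, c (i + m) = c i) ∧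
    ∀ i j, i < m → j < m → s (c i) = s (c j) → i = j

/-- A cycle (as a periodic infinite path) has no exits. -/
def CycleNoExit (s : E → V) (c : ℕ → E) : Prop :=
  ∀ i, ∀ e : E, s e = s (c i) → e = c i

/-- An exclusive cycle: every cycle based at one of its vertices is a rotation of it. -/
def IsExclusiveCycle (s r : E → V) (m : ℕ) (c : ℕ → E) : Prop :=
  IsCycle s r m c ∧ ∀ (m' : ℕ) (c' : ℕ → E), IsCycle s r m' c' →
    (∃ i, s (c' 0) = s (c i)) → ∃ k, ∀ j, c' j = c (j + k)

/-- `l` is (the list of edges of) a finite path starting at the vertex `v`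
(the empty list is the trivial path at `v`). -/
def IsPathFrom (s r : E → V) (v : V) (l : List E) : Prop :=
  l.Chain' (fun e f => r e = s f) ∧ ∀ h : l ≠ [], s (l.head h) = v

/-- The terminal vertex of a finite path starting at `v`. -/
def pathEnd (r : E → V) (v : V) (l : List E) : V :=
  if h : l ≠ [] then r (l.getLast h) else v

end graph

section elements

variable (K : Type*) [Field K] {V E : Type*} (s r : E → V)

/-- The finite set of edges emitted by a breaking vertex `w` of `H` whose range is
outside `H` (junk value `∅` if that set of edges is infinite). -/
def breakingFinset (H : Set V) (w : V) : Finset E :=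
  if h : {e : E | s e = w ∧ r e ∉ H}.Finite then h.toFinset else ∅

/-- The element `w^H = w - ∑_{s(e) = w, r(e) ∉ H} e e^*` of the Leavitt path algebra. -/
def wHElem (H : Set V) (w : V) : LeavittPathAlgebra K s r :=
  vtx K s r w - ∑ e ∈ breakingFinset s r H w, edg K s r e * gh K s r e

/-- The ideal `I(H, S)` generated by the vertices in `H` and the elements `w^H`, `w ∈ S`. -/
def idealHS (H : Set V) (S : Set V) : TwoSidedIdeal (LeavittPathAlgebra K s r) :=
  TwoSidedIdeal.span ((fun v => vtx K s r v) '' H ∪ (fun w => wHElem K s r H w) '' S)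

end elements

end LPA

/-- A (left) primitive ring: a ring admitting a faithful simple left module. -/
def IsPrimitiveRing (R : Type u) [Ring R] : Prop :=
  ∃ (M : Type u) (_ : AddCommGroup M) (_ : Module R M),
    IsSimpleModule R M ∧ ∀ x : R, (∀ m : M, x • m = 0) → x = 0

namespace LPA

section conc

variable {V E : Type*}

/-- Reachability through paths all of whose vertices beyond the first lie outside `H`,
i.e. reachability in the quotient graph `E ∖ (H, B_H)`. -/
def ReachesOutside (s r : E → V) (H : Set V) (u v : V) : Prop :=
  Relation.ReflTransGen (fun a b => ∃ e : E, s e = a ∧ r e = b ∧ r e ∉ H) u v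

variable (K : Type*) [Field K] (s r : E → V)

/-- The standard conclusion: for an edge `f`, in characteristic zero the elements
`a = 1 + α f^*`, `b = 1 + α f` (with `α = 2` or transcendental over the prime field)
generate a non-cyclic free subgroup of `L_K(E)^×`, and in characteristic `t > 0` the
elements `c = a + (β - 1) s(f) + (β⁻¹ - 1) r(f)`, `d = b + (β - 1) s(f) + (β⁻¹ - 1) r(f)`
(with `α, β` algebraically independent over the prime field) do. -/
def FreeSubgroupFromEdge (f : E) : Prop :=
  ∀ α β : K,
    (CharP K 0 → (α = 2 ∨ TranscendentalOverPrime K α) →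
      ∃ ua ub : (LeavittPathAlgebra K s r)ˣ,
        (ua : LeavittPathAlgebra K s r) =
            1 + algebraMap K (LeavittPathAlgebra K s r) α * gh K s r f ∧
        (ub : LeavittPathAlgebra K s r) =
            1 + algebraMap K (LeavittPathAlgebra K s r) α * edg K s r f ∧
        FreePair ua ub) ∧
    (∀ t : ℕ, 0 < t → CharP K t → AlgIndepOverPrime K α β →
      ∃ uc ud : (LeavittPathAlgebra K s r)ˣ,
        (uc : LeavittPathAlgebra K s r) =
            1 + algebraMap K (LeavittPathAlgebra K s r) α * gh K s r f
              + algebraMap K (LeavittPathAlgebra K s r) (β - 1) * vtx K s r (s f)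
              + algebraMap K (LeavittPathAlgebra K s r) (β⁻¹ - 1) * vtx K s r (r f) ∧
        (ud : LeavittPathAlgebra K s r) =
            1 + algebraMap K (LeavittPathAlgebra K s r) α * edg K s r f
              + algebraMap K (LeavittPathAlgebra K s r) (β - 1) * vtx K s r (s f)
              + algebraMap K (LeavittPathAlgebra K s r) (β⁻¹ - 1) * vtx K s r (r f) ∧
        FreePair uc ud)

end conc

end LPA

set_option linter.unusedSimpArgs false

/-! ### Square-zero elements and class-two normal subgroups in semiprime rings -/

/-- `R` is semiprime: `x R x = 0` forces `x = 0`. -/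
def SemiprimeRing (R : Type*) [Ring R] : Prop :=
  ∀ x : R, (∀ y, x * y * x = 0) → x = 0

section ring

variable {R : Type*} [Ring R]

theorem smul216_cancel {A : Type*} [AddCommGroup A] (h6 : ∀ x : A, (6 : ℕ) • x = 0 → x = 0)
    (x : A) (hx : (216 : ℤ) • x = 0) : x = 0 := by
  apply h6; apply h6; apply h6
  rw [← hx]; module

theorem add_self_cancel {A : Type*} [AddCommGroup A] (h6 : ∀ x : A, (6 : ℕ) • x = 0 → x = 0)
    (x : A) (hx : x + x = 0) : x = 0 := by
  apply h6
  have : (6 : ℕ) • x = (3 : ℕ) • (x + x) := by module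
  rw [this, hx, smul_zero]

/-- Vandermonde elimination at the nodes `1, -1, 2, -2`; the determinant involves only the
primes `2` and `3`. -/
theorem quartic_coeff_eq_zero {A : Type*} [AddCommGroup A]
    (h6 : ∀ x : A, (6 : ℕ) • x = 0 → x = 0) {a b c d : A}
    (h : ∀ t : ℤ, t • a + (t ^ 2) • b + (t ^ 3) • c + (t ^ 4) • d = 0) : a = 0 ∧ b = 0 := by
  have h1 := h 1
  have h2 := h (-1)
  have h3 := h 2
  have h4 := h (-2)
  constructor
  · apply smul216_cancel h6
    have : (216 : ℤ) • a =
        (144 : ℤ) • ((1 : ℤ) • a + ((1 : ℤ) ^ 2) • b + ((1 : ℤ) ^ 3) • c + ((1 : ℤ) ^ 4) • d)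
        - (144 : ℤ) • ((-1 : ℤ) • a + ((-1 : ℤ) ^ 2) • b + ((-1 : ℤ) ^ 3) • c
          + ((-1 : ℤ) ^ 4) • d)
        - (18 : ℤ) • ((2 : ℤ) • a + ((2 : ℤ) ^ 2) • b + ((2 : ℤ) ^ 3) • c + ((2 : ℤ) ^ 4) • d)
        + (18 : ℤ) • ((-2 : ℤ) • a + ((-2 : ℤ) ^ 2) • b + ((-2 : ℤ) ^ 3) • c
          + ((-2 : ℤ) ^ 4) • d) := by module
    rw [this, h1, h2, h3, h4]; simp
  · apply smul216_cancel h6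
    have : (216 : ℤ) • b =
        (144 : ℤ) • ((1 : ℤ) • a + ((1 : ℤ) ^ 2) • b + ((1 : ℤ) ^ 3) • c + ((1 : ℤ) ^ 4) • d)
        + (144 : ℤ) • ((-1 : ℤ) • a + ((-1 : ℤ) ^ 2) • b + ((-1 : ℤ) ^ 3) • c
          + ((-1 : ℤ) ^ 4) • d)
        - (9 : ℤ) • ((2 : ℤ) • a + ((2 : ℤ) ^ 2) • b + ((2 : ℤ) ^ 3) • c + ((2 : ℤ) ^ 4) • d)
        - (9 : ℤ) • ((-2 : ℤ) • a + ((-2 : ℤ) ^ 2) • b + ((-2 : ℤ) ^ 3) • c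
          + ((-2 : ℤ) ^ 4) • d) := by module
    rw [this, h1, h2, h3, h4]; simp

/-- A semiprime ring has no nonzero central nilpotent elements. -/
theorem SemiprimeRing.central_eq_zero (hR : SemiprimeRing R) {z : R} (hz : ∀ y, y * z = z * y) :
    ∀ n : ℕ, z ^ n = 0 → z = 0 := by
  have hsq : ∀ w : R, (∀ y, y * w = w * y) → w * w = 0 → w = 0 := fun w hw h => by
    apply hR; intro y
    rw [mul_assoc, hw, ← mul_assoc, h, zero_mul]
  have hc : ∀ n : ℕ, ∀ y, y * z ^ n = z ^ n * y := fun n y =>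
    ((show Commute y z from hz y).pow_right n)
  intro n
  induction n with
  | zero => intro h; have h1 : (1 : R) = 0 := by simpa using h
            rw [← mul_one z, h1, mul_zero]
  | succ n ih =>
    intro h
    rcases Nat.eq_zero_or_pos n with rfl | hn
    · simpa using h
    · apply ih
      apply hsq _ (hc n)
      obtain ⟨m, rfl⟩ : ∃ m, n = m + 1 := ⟨n - 1, by omega⟩
      have : z ^ (m + 1) * z ^ (m + 1) = z ^ (m + 1 + 1) * z ^ m := by
        rw [← pow_add, ← pow_add]; congr 1; omega
      rw [this, h, zero_mul]

/-- Let `a`, `b`, `2b - a + z` have square zero, with `z` central. The hypothesis `hη` says that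
the quadratic coefficient of `sq_zero_conj` is central, up to sign. This gives `z a b = z b a`, which
makes the central element `z` nilpotent. -/
theorem SemiprimeRing.second_difference_eq_zero (hR : SemiprimeRing R)
    (h6 : ∀ x : R, (6 : ℕ) • x = 0 → x = 0) {a b z : R}
    (ha : a * a = 0) (hb : b * b = 0) (hz : ∀ y, y * z = z * y)
    (hx : (z + (b + b) - a) * (z + (b + b) - a) = 0)
    (hη : ∀ y, y * (b * (z + (b + b) - a) + (z + (b + b) - a) * b
        + ((b + b) - (z + (b + b) - a)) * a)
      = (b * (z + (b + b) - a) + (z + (b + b) - a) * b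
        + ((b + b) - (z + (b + b) - a)) * a) * y) : z = 0 := by
  have haa : ∀ y, a * (a * y) = 0 := fun y => by rw [← mul_assoc, ha, zero_mul]
  have hbb : ∀ y, b * (b * y) = 0 := fun y => by rw [← mul_assoc, hb, zero_mul]
  have hza : a * z = z * a := hz a
  have hzb : b * z = z * b := hz b
  have hza' : ∀ y, a * (z * y) = z * (a * y) := fun y => by rw [← mul_assoc, hz, mul_assoc]
  have hzb' : ∀ y, b * (z * y) = z * (b * y) := fun y => by rw [← mul_assoc, hz, mul_assoc]
  have hcomm : z * (a * b) = z * (b * a) := by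
    have h := hη a
    rw [← sub_eq_zero]
    apply add_self_cancel h6
    simp only [mul_add, add_mul, mul_sub, sub_mul, mul_assoc, ha, hb, haa, hbb, hza, hzb, hza',
      hzb', mul_zero, zero_mul, add_zero, zero_add, sub_zero, zero_sub] at h
    rw [← sub_eq_zero] at h
    rw [← h]; abel
  have hab : ∀ y, z * (b * (a * y)) = z * (a * (b * y)) := fun y => by
    have := congrArg (· * y) hcomm
    simpa only [mul_assoc] using this.symm
  have haba : ∀ y, z * (a * (b * (a * y))) = 0 := fun y => by
    rw [← hza', hab, hza', haa, mul_zero]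
  have haba' : z * (a * (b * a)) = 0 := by rw [← hza', ← hcomm, hza', haa, mul_zero]
  simp only [mul_add, add_mul, mul_sub, sub_mul, mul_assoc, ha, hb, haa, hbb, hza, hzb, hza',
      hzb', mul_zero, zero_mul, add_zero, zero_add, sub_zero, zero_sub] at hx
  -- `z ^ 3 a b = 0`, then `z ^ 4 a = z ^ 4 b = 0`, then `z ^ 5 = 0`
  have e3 : z * (z * (z * (a * b))) = 0 := by
    have := congrArg (fun t => z * (a * (t * b))) hx
    simp only [mul_add, add_mul, mul_sub, sub_mul, mul_assoc, ha, hb, haa, hbb, hza, hzb, hza',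
      hzb', mul_zero, zero_mul, add_zero, zero_add, sub_zero, zero_sub, hab, haba, haba',
      neg_mul, mul_neg, neg_zero] at this
    exact this
  have ea : z * (z * (z * (z * a))) = 0 := by
    have := congrArg (fun t => z * (z * (t * a))) hx
    simp only [mul_add, add_mul, mul_sub, sub_mul, mul_assoc, ha, hb, haa, hbb, hza, hzb, hza',
      hzb', mul_zero, zero_mul, add_zero, zero_add, sub_zero, zero_sub, hab, haba, haba',
      neg_mul, mul_neg, neg_zero, ← hcomm, e3] at this
    exact this
  have eb : z * (z * (z * (z * b))) = 0 := by
    have := congrArg (fun t => z * (z * (t * b))) hx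
    simp only [mul_add, add_mul, mul_sub, sub_mul, mul_assoc, ha, hb, haa, hbb, hza, hzb, hza',
      hzb', mul_zero, zero_mul, add_zero, zero_add, sub_zero, zero_sub, hab, haba, haba',
      neg_mul, mul_neg, neg_zero, ← hcomm, e3] at this
    exact this
  have e5 : z * (z * (z * (z * z))) = 0 := by
    have := congrArg (fun t => z * (z * (z * t))) hx
    simp only [mul_add, add_mul, mul_sub, sub_mul, mul_assoc, ha, hb, haa, hbb, hza, hzb, hza',
      hzb', mul_zero, zero_mul, add_zero, zero_add, sub_zero, zero_sub, hab, haba, haba',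
      neg_mul, mul_neg, neg_zero, ← hcomm, e3, ea, eb] at this
    exact this
  exact hR.central_eq_zero hz 5 (by rw [← e5]; noncomm_ring)

/-- The unit `1 + x` attached to a square-zero element. -/
def sqZeroUnit (x : R) (hx : x * x = 0) : Rˣ where
  val := 1 + x
  inv := 1 - x
  val_inv := by simp [mul_sub, add_mul, hx]
  inv_val := by simp [mul_add, sub_mul, hx]

/-- `N` has class at most two as a subgroup of the unit group, in the strong sense that
commutators are central in the whole ring. -/
def CommutatorsCentral (N : Subgroup Rˣ) : Prop :=
  ∀ a ∈ N, ∀ b ∈ N, ∀ y : R, y * ↑(a * b * a⁻¹ * b⁻¹) = ↑(a * b * a⁻¹ * b⁻¹) * y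

/-- With `u = 1 + x` and `xᵢ = aⁱ x a⁻ⁱ`, the commutator of `a` and `u a u⁻¹` is
`(1 + x₁) (1 - x₂) (1 + x₁) (1 - x)`. Both elements lie in `N`, so this product is central. -/
theorem sq_zero_conj {N : Subgroup Rˣ} (hN : N.Normal) (hc : CommutatorsCentral N)
    {a : Rˣ} (ha : a ∈ N) {x : R} (hx : x * x = 0) (y : R) :
    y * ((1 + a * x * ↑a⁻¹) * (1 - a * (a * x * ↑a⁻¹) * ↑a⁻¹) * (1 + a * x * ↑a⁻¹) * (1 - x))
      = ((1 + a * x * ↑a⁻¹) * (1 - a * (a * x * ↑a⁻¹) * ↑a⁻¹) * (1 + a * x * ↑a⁻¹) * (1 - x))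
        * y := by
  have h := hc a ha _ (hN.conj_mem a ha (sqZeroUnit x hx)) y
  have key : ((a * (sqZeroUnit x hx * a * (sqZeroUnit x hx)⁻¹) * a⁻¹
        * (sqZeroUnit x hx * a * (sqZeroUnit x hx)⁻¹)⁻¹ : Rˣ) : R)
      = (1 + a * x * ↑a⁻¹) * (1 - a * (a * x * ↑a⁻¹) * ↑a⁻¹) * (1 + a * x * ↑a⁻¹) * (1 - x) := by
    set u := sqZeroUnit x hx with hu
    have hu1 : (u : R) = 1 + x := rfl
    have hu2 : ((u⁻¹ : Rˣ) : R) = 1 - x := rfl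
    have : a * (u * a * u⁻¹) * a⁻¹ * (u * a * u⁻¹)⁻¹
        = (a * u * a⁻¹) * (a * (a * u⁻¹ * a⁻¹) * a⁻¹) * (a * u * a⁻¹) * u⁻¹ := by
      group
    rw [this]
    simp only [Units.val_mul, hu1, hu2, mul_add, add_mul, mul_sub, sub_mul, mul_one, one_mul,
      Units.mul_inv]
  rw [key] at h
  exact h

/-- The product of `sq_zero_conj`, sorted by degree in `x0`, `x1`, `x2`. -/
theorem quartic_expand (x0 x1 x2 : R) (h : x1 * x1 = 0) :
    (1 + x1) * (1 - x2) * (1 + x1) * (1 - x0) = 1 + (x1 + x1 - x2 - x0)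
      + -(x1 * x2 + x2 * x1 + ((x1 + x1) - x2) * x0)
      + (-(x1 * x2 * x1) + (x1 * x2 + x2 * x1) * x0) + x1 * x2 * x1 * x0 := by
  have h' : ∀ y, x1 * (x1 * y) = 0 := fun y => by rw [← mul_assoc, h, zero_mul]
  simp only [mul_add, add_mul, mul_sub, sub_mul, mul_assoc, h, h', mul_zero, add_zero, mul_one,
    one_mul, zero_sub, sub_zero, neg_mul]
  abel

/-- Elements of a class-two normal subgroup act on square-zero elements with vanishing second
commutator. Replacing `x` by `t x`, `t ∈ ℤ`, in `sq_zero_conj` shows that the coefficients of `t`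
and `t²` are central. The first is, up to sign, the second difference of `x`, `a x a⁻¹`,
`a² x a⁻²`, and `second_difference_eq_zero` shows that it vanishes. -/
theorem second_commutator_eq_zero (hR : SemiprimeRing R)
    (h6 : ∀ x : R, (6 : ℕ) • x = 0 → x = 0) {N : Subgroup Rˣ} (hN : N.Normal)
    (hc : CommutatorsCentral N) {a : Rˣ} (ha : a ∈ N) {x : R} (hx : x * x = 0) :
    (a : R) * a * x + x * a * a = a * x * a + a * x * a := by
  obtain ⟨x1, hx1⟩ : ∃ x1, x1 = a * x * ↑a⁻¹ := ⟨_, rfl⟩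
  obtain ⟨x2, hx2⟩ : ∃ x2, x2 = a * (a * x * ↑a⁻¹) * ↑a⁻¹ := ⟨_, rfl⟩
  have sq : ∀ w : R, w * w = 0 → (a * w * ↑a⁻¹) * (a * w * ↑a⁻¹) = 0 := fun w hw => by
    have : (a * w * ↑a⁻¹) * (a * w * ↑a⁻¹) = a * (w * w) * ↑a⁻¹ := by
      simp only [mul_assoc, Units.inv_mul_cancel_left]
    rw [this, hw, mul_zero, zero_mul]
  have q1 : x1 * x1 = 0 := hx1 ▸ sq x hx
  have q2 : x2 * x2 = 0 := hx2 ▸ sq _ (sq x hx)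
  have W : ∀ t : ℤ, ∀ y : R,
      (t • (y * (x1 + x1 - x2 - x) - (x1 + x1 - x2 - x) * y)
      + (t ^ 2) • (y * -(x1 * x2 + x2 * x1 + ((x1 + x1) - x2) * x)
          - -(x1 * x2 + x2 * x1 + ((x1 + x1) - x2) * x) * y)
      + (t ^ 3) • (y * (-(x1 * x2 * x1) + (x1 * x2 + x2 * x1) * x)
          - (-(x1 * x2 * x1) + (x1 * x2 + x2 * x1) * x) * y)
      + (t ^ 4) • (y * (x1 * x2 * x1 * x) - (x1 * x2 * x1 * x) * y)) = 0 := by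
    intro t y
    have h := sq_zero_conj hN hc ha (x := t • x) (by rw [smul_mul_smul_comm, hx, smul_zero]) y
    have e1 : a * (t • x) * ↑a⁻¹ = t • x1 := by rw [hx1, mul_smul_comm, smul_mul_assoc]
    have e2 : a * (a * (t • x) * ↑a⁻¹) * ↑a⁻¹ = t • x2 := by 
      simp only [hx2, mul_smul_comm, smul_mul_assoc]
    rw [e2, e1, quartic_expand _ _ _ (by rw [smul_mul_smul_comm, q1, smul_zero])] at h
    rw [← sub_eq_zero] at h
    rw [← h]
    simp only [smul_mul_assoc, mul_smul_comm, mul_add, add_mul, mul_sub, sub_mul, mul_neg,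
      neg_mul, mul_one, one_mul]
    module
  have cen := fun y : R => quartic_coeff_eq_zero h6 (fun t => W t y)
  have hz : ∀ y, y * (x2 - (x1 + x1) + x) = (x2 - (x1 + x1) + x) * y := fun y => by
    have := (cen y).1
    rw [← sub_eq_zero, ← neg_eq_zero, ← this]
    simp only [mul_add, add_mul, mul_sub, sub_mul]; abel
  have hs : (x2 - (x1 + x1) + x) + (x1 + x1) - x = x2 := by abel
  have h0 := hR.second_difference_eq_zero h6 hx q1 hz (by rw [hs]; exact q2) (fun y => by
    rw [hs]
    have := (cen y).2
    rw [← sub_eq_zero, ← neg_eq_zero, ← this]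
    simp only [mul_add, add_mul, mul_sub, sub_mul, mul_neg, neg_mul]; abel)
  rw [hx2, hx1] at h0
  have h1 := congrArg (fun t => t * (a : R) * a) h0
  simp only [mul_add, add_mul, mul_sub, sub_mul, zero_mul, mul_assoc, Units.inv_mul_cancel_left,
    Units.inv_mul, mul_one] at h1
  rw [← sub_eq_zero, ← h1]
  simp only [mul_assoc]; abel

/-! ### Commuting with idempotents -/

/-- If `(c x)² c = 0` for all `x`, then `c = 0`: the case of bounded index of Levitzki's theorem
on nil one-sided ideals. -/
theorem SemiprimeRing.eq_zero_of_nil (hR : SemiprimeRing R) {c : R}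
    (h : ∀ x, c * x * c * x * c = 0) : c = 0 := by
  apply hR; intro x
  apply hR; intro w
  have h1 := h (x + x * c * w)
  have e : c * (x + x * c * w) * c * (x + x * c * w) * c = c * x * c * x * c
      + c * x * c * x * c * w * c + c * (x * c * w) * c * (x * c * w) * c
      + c * x * c * w * (c * x * c) := by noncomm_ring
  rw [e, h x, h (x * c * w)] at h1
  simpa using h1

/-- If the second commutator with `a` vanishes on square-zero elements, then `a` maps the image of
each idempotent to itself: the square-zero elements `p y (1 - p)` show that `c = (1 - p) a p`
satisfies `c y c y c = 0`. -/
theorem corner_eq_zero (hR : SemiprimeRing R) (h6 : ∀ x : R, (6 : ℕ) • x = 0 → x = 0) {a : R}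
    (hD : ∀ x : R, x * x = 0 → a * a * x + x * a * a = a * x * a + a * x * a)
    {p : R} (hp : p * p = p) : (1 - p) * a * p = 0 := by
  apply hR.eq_zero_of_nil
  intro y
  have hp' : ∀ y, p * (p * y) = p * y := fun y => by rw [← mul_assoc, hp]
  obtain ⟨x, hx⟩ : ∃ x, x = p * y * (1 - p) := ⟨_, rfl⟩
  have hqp : (1 - p) * p = 0 := by rw [sub_mul, one_mul, hp, sub_self]
  have hqx : (1 - p) * x = 0 := by rw [hx, mul_assoc p, ← mul_assoc (1 - p), hqp, zero_mul]
  have hxx : x * x = 0 := by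
    conv_lhs => lhs; rw [hx]
    rw [mul_assoc, hqx, mul_zero]
  have hxx' : ∀ y, x * (x * y) = 0 := fun y => by rw [← mul_assoc, hxx, zero_mul]
  have h := hD x hxx
  -- `q a x a x = 0`, where `q = 1 - p`, by comparing `x (a² x + x a²)` and `(a² x + x a²) x`
  have hl := congrArg (fun t => x * t) h
  have hr := congrArg (fun t => t * x) h
  simp only [mul_add, add_mul, mul_assoc, hxx, hxx', mul_zero, zero_add, add_zero] at hl hr
  have hqaxax : (1 - p) * (a * (x * (a * x))) = 0 := by
    apply add_self_cancel h6
    rw [← mul_add, ← hr, hl, ← mul_add, ← mul_assoc, hqx, zero_mul]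
  have : (1 - p) * a * p * y * ((1 - p) * a * p) * y * ((1 - p) * a * p)
      = (1 - p) * (a * (x * (a * x))) * (a * p) := by
    rw [hx]
    simp only [mul_assoc]
  rw [this, hqaxax, zero_mul]

theorem commute_idempotent (hR : SemiprimeRing R) (h6 : ∀ x : R, (6 : ℕ) • x = 0 → x = 0) {a : R}
    (hD : ∀ x : R, x * x = 0 → a * a * x + x * a * a = a * x * a + a * x * a)
    {p : R} (hp : p * p = p) : a * p = p * a := by
  have h1 := corner_eq_zero hR h6 hD hp
  have h2 := corner_eq_zero hR h6 hD (p := 1 - p) (by simp [mul_sub, sub_mul, hp])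
  simp only [sub_sub_cancel, mul_sub, sub_mul, mul_one, one_mul] at h1 h2
  rw [sub_eq_zero] at h1 h2
  exact h1.trans h2.symm

/-- The ideal generated by all corners `p R (1 - p)`, `p` idempotent. -/
def cornerIdeal (R : Type*) [Ring R] : TwoSidedIdeal R :=
  TwoSidedIdeal.span {x | ∃ p r : R, p * p = p ∧ x = p * r * (1 - p)}

theorem corner_mem {p : R} (hp : p * p = p) (r : R) : p * r * (1 - p) ∈ cornerIdeal R :=
  TwoSidedIdeal.subset_span ⟨p, r, hp, rfl⟩

theorem corner_mem' {p : R} (hp : p * p = p) (r : R) : (1 - p) * r * p ∈ cornerIdeal R := by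
  have := corner_mem (p := 1 - p) (by simp [mul_sub, sub_mul, hp]) r
  rwa [sub_sub_cancel] at this

/-- In a semiprime ring that is commutative modulo the corner ideal `I`, commuting with the
idempotents implies centrality: if `a` commutes with them then it commutes with `I`, so `[a, x]`
annihilates `I`; as `[a, x]` also lies in `I`, it vanishes. -/
theorem central_of_commute_idempotent (hR : SemiprimeRing R)
    (hI : ∀ x y : R, x * y - y * x ∈ cornerIdeal R) {a : R}
    (ha : ∀ p : R, p * p = p → a * p = p * a) (x : R) : a * x = x * a := by
  have hcor : ∀ p r : R, p * p = p → a * (p * r * (1 - p)) = (p * r * (1 - p)) * a := by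
    intro p r hp
    have hp' : ∀ y, p * (p * y) = p * y := fun y => by rw [← mul_assoc, hp]
    have h := ha (p + p * r * (1 - p)) (by
      simp only [mul_add, add_mul, mul_sub, sub_mul, mul_one, mul_assoc, hp, hp']; abel)
    rw [mul_add, add_mul, ha p hp] at h
    exact add_left_cancel h
  have hcor' : ∀ p r : R, p * p = p → a * ((1 - p) * r * p) = ((1 - p) * r * p) * a := by
    intro p r hp
    have := hcor (1 - p) r (by simp [mul_sub, sub_mul, hp])
    rwa [sub_sub_cancel] at this
  have hleft : ∀ p r t : R, p * p = p →
      a * (t * (p * r * (1 - p))) = (t * (p * r * (1 - p))) * a := by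
    intro p r t hp
    have hp' : ∀ y, p * (p * y) = p * y := fun y => by rw [← mul_assoc, hp]
    have e : t * (p * r * (1 - p)) = p * (t * p * r) * (1 - p)
        + ((1 - p) * t * p) * (p * r * (1 - p)) := by
      simp only [mul_add, add_mul, mul_sub, sub_mul, mul_one, one_mul, mul_assoc, hp, hp']; abel
    rw [e, mul_add, add_mul, hcor _ _ hp, ← mul_assoc a, hcor' _ _ hp, mul_assoc _ a,
      hcor _ _ hp]
    simp only [mul_assoc]
  have hann : ∀ i ∈ cornerIdeal R, ∀ t, (a * x - x * a) * t * i = 0 := by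
    intro i hi
    induction hi using TwoSidedIdeal.span_induction with
    | mem i h =>
      obtain ⟨p, r, hp, rfl⟩ := h
      intro t
      rw [sub_mul, sub_mul, sub_eq_zero]
      have h1 := hleft p r (x * t) hp
      have h2 := hleft p r t hp
      calc a * x * t * (p * r * (1 - p)) = a * (x * t * (p * r * (1 - p))) := by
            simp only [mul_assoc]
        _ = x * (t * (p * r * (1 - p)) * a) := by rw [h1]; simp only [mul_assoc]
        _ = x * a * t * (p * r * (1 - p)) := by rw [← h2]; simp only [mul_assoc]
    | zero => simp
    | add i j _ _ hi hj => intro t; rw [mul_add, hi, hj, add_zero]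
    | neg i _ hi => intro t; rw [mul_neg, hi, neg_zero]
    | left_absorb s i _ hi => intro t; rw [← mul_assoc, mul_assoc _ t, hi]
    | right_absorb s i _ hi => intro t; rw [← mul_assoc, hi, zero_mul]
  rw [← sub_eq_zero]
  exact hR _ (hann _ (hI a x))

/-! ### Solvable normal subgroups of the unit group -/

/-- Terms of the derived series of `G`, as subgroups of the ambient group. -/
def derivedIn {H : Type*} [Group H] (G : Subgroup H) : ℕ → Subgroup H
  | 0 => G
  | n + 1 => ⁅derivedIn G n, derivedIn G n⁆

theorem map_derivedSeries {H : Type*} [Group H] (G : Subgroup H) (n : ℕ) :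
    (derivedSeries G n).map G.subtype = derivedIn G n := by
  induction n with
  | zero => simp [derivedIn, ← MonoidHom.range_eq_map]
  | succ n ih => rw [derivedSeries_succ, Subgroup.map_commutator, ih, derivedIn]

theorem derivedIn_normal {H : Type*} [Group H] (G : Subgroup H) (hG : G.Normal) (n : ℕ) :
    (derivedIn G n).Normal := by
  induction n with
  | zero => exact hG
  | succ n ih => exact Subgroup.commutator_normal _ _

/-- In a semiprime ring without 6-torsion that is commutative modulo its corner ideal, solvable
normal subgroups of the unit group are central. -/
theorem solvable_normal_central (hR : SemiprimeRing R) (h6 : ∀ x : R, (6 : ℕ) • x = 0 → x = 0)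
    (hI : ∀ x y : R, x * y - y * x ∈ cornerIdeal R) (G : Subgroup Rˣ) (hG : G.Normal)
    (hS : Group.IsSolvable G) : ∀ g ∈ G, ∀ x : R, (g : R) * x = x * g := by
  obtain ⟨n, hn⟩ := hS.solvable
  -- centrality climbs the derived series from the trivial term back up to `G`
  have climb : ∀ k, (∀ g ∈ derivedIn G k, ∀ x : R, (g : R) * x = x * g) →
      ∀ g ∈ G, ∀ x : R, (g : R) * x = x * g := by
    intro k
    induction k with
    | zero => exact id
    | succ k ih =>
      intro h
      apply ih
      intro g hg
      have hc : CommutatorsCentral (derivedIn G k) := fun a ha b hb y =>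
        (h _ (Subgroup.commutator_mem_commutator ha hb) y).symm
      apply central_of_commute_idempotent hR hI
      intro p hp
      exact commute_idempotent hR h6 (fun x hx =>
        second_commutator_eq_zero hR h6 (derivedIn_normal G hG k) hc hg hx) hp
  refine climb n fun g hg x => ?_
  rw [← map_derivedSeries, hn, Subgroup.map_bot, Subgroup.mem_bot] at hg
  simp [hg]

end ring

/-! ### Leavitt families and commutativity modulo the corner ideal -/

/-- Elements `v`, `e`, `g` of a ring indexed by vertices, edges and ghost edges and satisfying
the relations of the Leavitt path algebra of the graph `(V, E, s, r)`. -/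
structure LeavittFamily {V E R : Type*} [Fintype V] [Ring R] (s r : E → V)
    (v : V → R) (e g : E → R) : Prop where
  vv : ∀ a b, v a * v b = if a = b then v a else 0
  ve : ∀ i, v (s i) * e i = e i
  ev : ∀ i, e i * v (r i) = e i
  vg : ∀ i, v (r i) * g i = g i
  gv : ∀ i, g i * v (s i) = g i
  ck1 : ∀ i j, g i * e j = if i = j then v (r i) else 0
  one : (1 : R) = ∑ a, v a
  ck2 : ∀ (a : V) (hfin : {i : E | s i = a}.Finite) (_ : {i : E | s i = a}.Nonempty),
    v a = ∑ i ∈ hfin.toFinset, e i * g i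

/-- The family generates the `K`-algebra `R`. -/
def GeneratesAlgebra (K : Type*) {V E R : Type*} [Field K] [Ring R] [Algebra K R]
    (v : V → R) (e g : E → R) : Prop :=
  Algebra.adjoin K (Set.range v ∪ Set.range e ∪ Set.range g) = ⊤

theorem GeneratesAlgebra.induction {K V E R : Type*} [Field K] [Ring R] [Algebra K R]
    {v : V → R} {e g : E → R} (h : GeneratesAlgebra K v e g) {P : R → Prop}
    (hv : ∀ a, P (v a)) (he : ∀ i, P (e i)) (hg : ∀ i, P (g i))
    (hk : ∀ k : K, P (algebraMap K R k)) (hadd : ∀ x y, P x → P y → P (x + y))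
    (hmul : ∀ x y, P x → P y → P (x * y)) (x : R) : P x := by
  have hx : x ∈ Algebra.adjoin K (Set.range v ∪ Set.range e ∪ Set.range g) := by
    rw [h]; exact Algebra.mem_top
  induction hx using Algebra.adjoin_induction with
  | mem x hx =>
    rcases hx with (⟨a, rfl⟩ | ⟨i, rfl⟩) | ⟨i, rfl⟩
    exacts [hv a, he i, hg i]
  | algebraMap k => exact hk k
  | add x y _ _ hx hy => exact hadd x y hx hy
  | mul x y _ _ hx hy => exact hmul x y hx hy

namespace LeavittFamily

section comm

variable {V E R : Type*} [Fintype V] [Ring R] {s r : E → V} {v : V → R} {e g : E → R}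

theorem idem (h : LeavittFamily s r v e g) (a : V) : v a * v a = v a := by simp [h.vv]

theorem ck1_self (h : LeavittFamily s r v e g) (i : E) : g i * e i = v (r i) := by simp [h.ck1]

theorem ck1_ne (h : LeavittFamily s r v e g) {i j : E} (hij : i ≠ j) : g i * e j = 0 := by
  simp [h.ck1, hij]

theorem idem_eg (h : LeavittFamily s r v e g) (i : E) : (e i * g i) * (e i * g i) = e i * g i := by
  rw [mul_assoc, ← mul_assoc (g i), h.ck1_self, ← mul_assoc, h.ev]

theorem idem_bracket {p : R} (hp : p * p = p) (x : R) : p * x - x * p ∈ cornerIdeal R := by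
  have : p * x - x * p = p * x * (1 - p) - (1 - p) * x * p := by noncomm_ring
  rw [this]
  exact sub_mem (corner_mem hp x) (corner_mem' hp x)

theorem idem_bracket' {p : R} (hp : p * p = p) (x : R) : x * p - p * x ∈ cornerIdeal R := by
  rw [← neg_sub]; exact neg_mem (idem_bracket hp x)

/-- Edges that are not loops die modulo the corner ideal. -/
theorem edge_mem_of_ne (h : LeavittFamily s r v e g) {i : E} (hi : s i ≠ r i) :
    e i ∈ cornerIdeal R ∧ g i ∈ cornerIdeal R := by
  constructor
  · have := idem_bracket (h.idem (s i)) (e i)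
    have h0 : e i * v (s i) = 0 := by
      rw [← h.ev, mul_assoc, h.vv, if_neg hi.symm, mul_zero]
    rwa [h.ve, h0, sub_zero] at this
  · have := idem_bracket (h.idem (r i)) (g i)
    have h0 : g i * v (r i) = 0 := by
      rw [← h.gv, mul_assoc, h.vv, if_neg hi, mul_zero]
    rwa [h.vg, h0, sub_zero] at this

/-- A loop becomes unitary in its corner modulo the corner ideal. -/
theorem loop_range_mem (h : LeavittFamily s r v e g) {i : E} (hi : s i = r i) :
    v (s i) - e i * g i ∈ cornerIdeal R := by
  have h1 := idem_bracket (h.idem_eg i) (e i)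
  have h2 : e i * g i * e i = e i := by rw [mul_assoc, h.ck1_self, h.ev]
  rw [h2] at h1
  have h3 := TwoSidedIdeal.mul_mem_left _ (g i) _ h1
  have h4 : g i * (e i - e i * (e i * g i)) = v (s i) - e i * g i := by
    rw [mul_sub, ← mul_assoc, h.ck1_self, ← hi, ← mul_assoc, h.ve]
  rwa [h4] at h3

theorem loop_other_mem (h : LeavittFamily s r v e g) {i j : E} (hi : s i = r i) (hij : i ≠ j)
    (hs : s i = s j) : e j ∈ cornerIdeal R ∧ g j ∈ cornerIdeal R := by
  have hm := h.loop_range_mem hi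
  constructor
  · have := TwoSidedIdeal.mul_mem_right _ _ (e j) hm
    rwa [sub_mul, hs, h.ve, mul_assoc, h.ck1_ne hij, mul_zero, sub_zero] at this
  · have := TwoSidedIdeal.mul_mem_left _ (g j) _ hm
    rwa [mul_sub, hs, h.gv, ← mul_assoc, h.ck1_ne hij.symm, zero_mul, sub_zero] at this

theorem bracket_mem_left {I : TwoSidedIdeal R} {x : R} (hx : x ∈ I) (y : R) :
    x * y - y * x ∈ I :=
  sub_mem (I.mul_mem_right _ _ hx) (I.mul_mem_left _ _ hx)

theorem bracket_mem_right {I : TwoSidedIdeal R} {x : R} (hx : x ∈ I) (y : R) :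
    y * x - x * y ∈ I :=
  sub_mem (I.mul_mem_left _ _ hx) (I.mul_mem_right _ _ hx)

theorem gen_bracket (h : LeavittFamily s r v e g) (i j : E) :
    (e i * e j - e j * e i ∈ cornerIdeal R ∧ e i * g j - g j * e i ∈ cornerIdeal R) ∧
    (g i * e j - e j * g i ∈ cornerIdeal R ∧ g i * g j - g j * g i ∈ cornerIdeal R) := by
  by_cases hi : s i = r i
  swap
  · have := h.edge_mem_of_ne hi
    exact ⟨⟨bracket_mem_left this.1 _, bracket_mem_left this.1 _⟩,
      bracket_mem_left this.2 _, bracket_mem_left this.2 _⟩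
  by_cases hj : s j = r j
  swap
  · have := h.edge_mem_of_ne hj
    exact ⟨⟨bracket_mem_right this.1 _, bracket_mem_right this.2 _⟩,
      bracket_mem_right this.1 _, bracket_mem_right this.2 _⟩
  by_cases hij : i = j
  · subst hij
    have hm := h.loop_range_mem hi
    rw [hi, ← h.ck1_self] at hm
    refine ⟨⟨?_, ?_⟩, ?_, ?_⟩
    · rw [sub_self]; exact zero_mem _
    · rw [← neg_sub]; exact neg_mem hm
    · exact hm
    · rw [sub_self]; exact zero_mem _
  by_cases hs : s i = s j
  · have := h.loop_other_mem hi hij hs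
    exact ⟨⟨bracket_mem_right this.1 _, bracket_mem_right this.2 _⟩,
      bracket_mem_right this.1 _, bracket_mem_right this.2 _⟩
  -- loops at distinct vertices are orthogonal
  have orth : ∀ {x y : R} {a b : V}, a ≠ b → x * v a = x → v b * y = y → x * y = 0 := by
    intro x y a b hab hx hy
    rw [← hx, ← hy, mul_assoc, ← mul_assoc (v a), h.vv, if_neg hab, zero_mul, mul_zero]
  have hs' : s j ≠ s i := Ne.symm hs
  have evi : e i * v (s i) = e i := by rw [hi, h.ev]
  have evj : e j * v (s j) = e j := by rw [hj, h.ev]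
  have vgi : v (s i) * g i = g i := by rw [hi, h.vg]
  have vgj : v (s j) * g j = g j := by rw [hj, h.vg]
  refine ⟨⟨?_, ?_⟩, ?_, ?_⟩
  · rw [orth hs evi (h.ve j), orth hs' evj (h.ve i), sub_zero]; exact zero_mem _
  · rw [orth hs evi vgj, orth hs' (h.gv j) (h.ve i), sub_zero]; exact zero_mem _
  · rw [orth hs (h.gv i) (h.ve j), orth hs' evj vgi, sub_zero]; exact zero_mem _
  · rw [orth hs (h.gv i) vgj, orth hs' (h.gv j) vgi, sub_zero]; exact zero_mem _

/-- An algebra generated by a Leavitt family is commutative modulo its corner ideal. -/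
theorem bracket_mem {K : Type*} [Field K] [Algebra K R] (h : LeavittFamily s r v e g)
    (hgen : GeneratesAlgebra K v e g) (x y : R) : x * y - y * x ∈ cornerIdeal R := by
  -- it suffices to test the second argument on generators
  have step : ∀ x : R, (∀ a, x * v a - v a * x ∈ cornerIdeal R) →
      (∀ i, x * e i - e i * x ∈ cornerIdeal R) → (∀ i, x * g i - g i * x ∈ cornerIdeal R) →
      ∀ y, x * y - y * x ∈ cornerIdeal R := by
    intro x h1 h2 h3
    refine hgen.induction h1 h2 h3 (fun k => ?_) (fun y z hy hz => ?_) (fun y z hy hz => ?_)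
    · rw [Algebra.commutes, sub_self]; exact zero_mem _
    · have : x * (y + z) - (y + z) * x = (x * y - y * x) + (x * z - z * x) := by noncomm_ring
      rw [this]; exact add_mem hy hz
    · have : x * (y * z) - (y * z) * x = (x * y - y * x) * z + y * (x * z - z * x) := by
        noncomm_ring
      rw [this]
      exact add_mem (TwoSidedIdeal.mul_mem_right _ _ _ hy) (TwoSidedIdeal.mul_mem_left _ _ _ hz)
  have flip : ∀ {x y : R}, x * y - y * x ∈ cornerIdeal R → y * x - x * y ∈ cornerIdeal R :=
    fun hxy => by rw [← neg_sub]; exact neg_mem hxy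
  refine step x (fun a => idem_bracket' (h.idem a) x) (fun i => ?_) (fun i => ?_) y
  · exact flip (step (e i) (fun a => idem_bracket' (h.idem a) _)
      (fun j => (h.gen_bracket i j).1.1) (fun j => (h.gen_bracket i j).1.2) x)
  · exact flip (step (g i) (fun a => idem_bracket' (h.idem a) _)
      (fun j => (h.gen_bracket i j).2.1) (fun j => (h.gen_bracket i j).2.2) x)

end comm

end LeavittFamily

/-! ### Generators and relations of the Leavitt path algebra -/

namespace LPA

variable (K : Type*) [Field K] {V E : Type*} (s r : E → V)

theorem generates : GeneratesAlgebra K (vtx K s r) (edg K s r) (gh K s r) := by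
  rw [GeneratesAlgebra, eq_top_iff]
  intro x _
  obtain ⟨y, rfl⟩ := RingQuot.mkAlgHom_surjective K (LeavittRel K s r) x
  induction y using FreeAlgebra.induction with
  | grade0 k => rw [AlgHom.commutes]; exact Subalgebra.algebraMap_mem _ _
  | grade1 x =>
    apply Algebra.subset_adjoin
    cases x with
    | vertex a => exact Or.inl (Or.inl ⟨a, rfl⟩)
    | edge i => exact Or.inl (Or.inr ⟨i, rfl⟩)
    | ghost i => exact Or.inr ⟨i, rfl⟩
  | mul a b ha hb => rw [map_mul]; exact mul_mem (ha trivial) (hb trivial)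
  | add a b ha hb => rw [map_add]; exact add_mem (ha trivial) (hb trivial)

/-- A branching system on `V × X`, where `X = E ⊕ ℕ`: the set over each non-sink `a` is split into copies of `X`
indexed by the edges leaving `a`. Here `φ i` is the inclusion of the copy of index `i`, while
`d a y` and `t a y` are the index of the copy containing `y` and the position of `y` in it. -/
theorem exists_branching : ∃ (φ : E → E ⊕ ℕ → E ⊕ ℕ) (d : V → E ⊕ ℕ → Option E)
    (t : V → E ⊕ ℕ → E ⊕ ℕ), (∀ i x, d (s i) (φ i x) = some i) ∧ (∀ i x, t (s i) (φ i x) = x) ∧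
      (∀ a y i, d a y = some i → s i = a ∧ φ i (t a y) = y) ∧
      ∀ a y, (∃ i, s i = a) → ∃ i, d a y = some i := by
  have hX : ∀ a, (∃ i, s i = a) → Nonempty ({i // s i = a} × (E ⊕ ℕ) ≃ (E ⊕ ℕ)) := by
    rintro a ⟨i, hi⟩
    rw [← Cardinal.eq, Cardinal.mk_prod, Cardinal.lift_id, Cardinal.lift_id]
    apply Cardinal.mul_eq_right (Cardinal.aleph0_le_mk _)
    · exact Cardinal.mk_le_of_injective (f := fun j => Sum.inl j.1)
        fun x y hxy => Subtype.ext (Sum.inl_injective hxy)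
    · exact Cardinal.mk_ne_zero_iff.2 ⟨⟨i, hi⟩⟩
  let eqv : ∀ a, (∃ i, s i = a) → {i // s i = a} × (E ⊕ ℕ) ≃ (E ⊕ ℕ) := fun a h => (hX a h).some
  refine ⟨fun i x => eqv (s i) ⟨i, rfl⟩ (⟨i, rfl⟩, x),
    fun a y => if h : ∃ i, s i = a then some ((eqv a h).symm y).1.1 else none,
    fun a y => if h : ∃ i, s i = a then ((eqv a h).symm y).2 else y, ?_, ?_, ?_, ?_⟩
  · intro i x
    have h : ∃ j, s j = s i := ⟨i, rfl⟩
    simp [h]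
  · intro i x
    have h : ∃ j, s j = s i := ⟨i, rfl⟩
    simp [h]
  · intro a y i hd
    by_cases h : ∃ i, s i = a
    · simp only [h, dif_pos, Option.some.injEq] at hd ⊢
      obtain ⟨z, rfl⟩ := (eqv a h).surjective y
      obtain ⟨⟨j, hj⟩, x⟩ := z
      simp only [Equiv.symm_apply_apply] at hd ⊢
      subst hd
      subst hj
      exact ⟨rfl, rfl⟩
    · simp [h] at hd
  · intro a y h
    simp [h]

variable [Fintype V]

theorem leavittFamily : LeavittFamily s r (vtx K s r) (edg K s r) (gh K s r) where
  vv a b := by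
    have := RingQuot.mkAlgHom_rel K (LeavittRel.cohn (CohnRel.vtx_mul (K := K) (s := s) (r := r) a b))
    rw [map_mul] at this
    refine this.trans ?_
    split_ifs
    · rfl
    · exact map_zero _
  ve i := by
    have := RingQuot.mkAlgHom_rel K (LeavittRel.cohn (CohnRel.edge_src (K := K) (s := s) (r := r) i))
    rwa [map_mul] at this
  ev i := by
    have := RingQuot.mkAlgHom_rel K (LeavittRel.cohn (CohnRel.edge_rng (K := K) (s := s) (r := r) i))
    rwa [map_mul] at this
  vg i := by
    have := RingQuot.mkAlgHom_rel K (LeavittRel.cohn (CohnRel.ghost_rng (K := K) (s := s) (r := r) i))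
    rwa [map_mul] at this
  gv i := by
    have := RingQuot.mkAlgHom_rel K (LeavittRel.cohn (CohnRel.ghost_src (K := K) (s := s) (r := r) i))
    rwa [map_mul] at this
  ck1 i j := by
    have := RingQuot.mkAlgHom_rel K (LeavittRel.cohn (CohnRel.ck1 (K := K) (s := s) (r := r) i j))
    rw [map_mul] at this
    refine this.trans ?_
    split_ifs
    · rfl
    · exact map_zero _
  one := by
    have := RingQuot.mkAlgHom_rel K (LeavittRel.cohn (CohnRel.unit (K := K) (s := s) (r := r)))
    rwa [map_one, map_sum] at this
  ck2 a hfin hne := by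
    have := RingQuot.mkAlgHom_rel K (LeavittRel.ck2 (K := K) (s := s) (r := r) a hfin hne)
    rw [map_sum] at this
    simp only [map_mul] at this
    exact this

/-- The universal property: a Leavitt family in an algebra `A` is the image of the
canonical one. -/
theorem exists_hom {A : Type*} [Ring A] [Algebra K A] {v : V → A} {e g : E → A}
    (h : LeavittFamily s r v e g) : ∃ φ : LeavittPathAlgebra K s r →ₐ[K] A,
      (∀ a, φ (vtx K s r a) = v a) ∧ (∀ i, φ (edg K s r i) = e i) ∧
        ∀ i, φ (gh K s r i) = g i := by
  let F : FreeAlgebra K (Gen V E) →ₐ[K] A := FreeAlgebra.lift K fun x => match x with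
    | Gen.vertex a => v a
    | Gen.edge i => e i
    | Gen.ghost i => g i
  have Fv : ∀ a, F (FreeAlgebra.ι K (Gen.vertex a)) = v a := fun a =>
    FreeAlgebra.lift_ι_apply _ _
  have Fe : ∀ i, F (FreeAlgebra.ι K (Gen.edge i)) = e i := fun i =>
    FreeAlgebra.lift_ι_apply _ _
  have Fg : ∀ i, F (FreeAlgebra.ι K (Gen.ghost i)) = g i := fun i =>
    FreeAlgebra.lift_ι_apply _ _
  have hone := h.one
  have hF : ∀ ⦃x y⦄, LeavittRel K s r x y → F x = F y := by
    intro x y hxy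
    cases hxy with
    | cohn hc =>
      cases hc with
      | vtx_mul a b => rw [map_mul, apply_ite F, map_zero, Fv, Fv, h.vv]
      | edge_src i => rw [map_mul, Fv, Fe, h.ve]
      | edge_rng i => rw [map_mul, Fv, Fe, h.ev]
      | ghost_rng i => rw [map_mul, Fv, Fg, h.vg]
      | ghost_src i => rw [map_mul, Fv, Fg, h.gv]
      | ck1 i j => rw [map_mul, apply_ite F, map_zero, Fg, Fe, Fv, h.ck1]
      | unit =>
        rw [map_one, map_sum]
        simp only [Fv]
        convert hone
    | ck2 a hfin hne =>
      rw [map_sum, Fv, h.ck2 a hfin hne]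
      simp only [map_mul, Fe, Fg]
  refine ⟨RingQuot.liftAlgHom K ⟨F, hF⟩, fun a => ?_, fun i => ?_, fun i => ?_⟩
  · exact (RingQuot.liftAlgHom_mkAlgHom_apply K F hF _).trans (Fv a)
  · exact (RingQuot.liftAlgHom_mkAlgHom_apply K F hF _).trans (Fe i)
  · exact (RingQuot.liftAlgHom_mkAlgHom_apply K F hF _).trans (Fg i)

/-- Vertices are nonzero: they act nontrivially on the functions on a branching system. -/
theorem vtx_ne_zero (a : V) : vtx K s r a ≠ 0 := by
  obtain ⟨φ, d, t, h1, h2, h3, h4⟩ := exists_branching s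
  let Tv : V → Module.End K (V × (E ⊕ ℕ) → K) := fun b =>
    { toFun := fun f p => if p.1 = b then f p else 0
      map_add' := fun f f' => by ext p; simp only [Pi.add_apply]; split_ifs <;> simp
      map_smul' := fun k f => by ext p; simp }
  let Te : E → Module.End K (V × (E ⊕ ℕ) → K) := fun i =>
    { toFun := fun f p => if d p.1 p.2 = some i then f (r i, t p.1 p.2) else 0
      map_add' := fun f f' => by ext p; simp only [Pi.add_apply]; split_ifs <;> simp
      map_smul' := fun k f => by ext p; simp }
  let Tg : E → Module.End K (V × (E ⊕ ℕ) → K) := fun i =>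
    { toFun := fun f p => if p.1 = r i then f (s i, φ i p.2) else 0
      map_add' := fun f f' => by ext p; simp only [Pi.add_apply]; split_ifs <;> simp
      map_smul' := fun k f => by ext p; simp }
  have hTv : ∀ b f p, Tv b f p = if p.1 = b then f p else 0 := fun _ _ _ => rfl
  have hTe : ∀ i f p, Te i f p = if d p.1 p.2 = some i then f (r i, t p.1 p.2) else 0 :=
    fun _ _ _ => rfl
  have hTg : ∀ i f p, Tg i f p = if p.1 = r i then f (s i, φ i p.2) else 0 := fun _ _ _ => rfl
  have hfam : LeavittFamily s r Tv Te Tg :=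
    { vv := fun b c => by
        ext1 f; ext p
        split_ifs with hbc
        · subst hbc
          simp only [Module.End.mul_apply, hTv]
          split_ifs <;> rfl
        · simp only [Module.End.mul_apply, hTv, LinearMap.zero_apply, Pi.zero_apply]
          split_ifs with h h' <;> first | rfl | exact absurd (h.symm.trans h') hbc
      ve := fun i => by
        ext1 f; ext p
        simp only [Module.End.mul_apply, hTv, hTe]
        split_ifs with h h'
        · rfl
        · rfl
        · exact absurd (h3 _ _ _ ‹_›).1.symm h
        · rfl
      ev := fun i => by
        ext1 f; ext p
        simp [Module.End.mul_apply, hTv, hTe]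
      vg := fun i => by
        ext1 f; ext p
        simp only [Module.End.mul_apply, hTv, hTg]
        split_ifs <;> rfl
      gv := fun i => by
        ext1 f; ext p
        simp [Module.End.mul_apply, hTv, hTg]
      ck1 := fun i j => by
        ext1 f; ext ⟨b, x⟩
        by_cases hij : i = j
        · subst hij
          simp only [Module.End.mul_apply, hTv, hTg, hTe, h1, h2, if_true]
          split_ifs with h
          · rw [h]
          · rfl
        · simp [Module.End.mul_apply, hTg, hTe, h1, hij]
      one := by
        ext1 f; ext p
        simp [LinearMap.sum_apply, Finset.sum_apply, hTv]
      ck2 := fun b hfin hne => by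
        ext1 f; ext p
        simp only [LinearMap.sum_apply, Finset.sum_apply, Module.End.mul_apply, hTv, hTe, hTg,
          if_true]
        split_ifs with h
        · obtain ⟨i, hi⟩ := h4 p.1 p.2 (by obtain ⟨i, hi⟩ := hne; exact ⟨i, hi.trans h.symm⟩)
          have h5 := h3 _ _ _ hi
          rw [Finset.sum_eq_single i]
          · rw [if_pos hi, h5.1, h5.2]
          · intro j _ hj
            rw [if_neg]
            rw [hi]; exact fun h => hj (Option.some.inj h).symm
          · intro hn
            exact absurd (hfin.mem_toFinset.2 (h5.1.trans h)) hn
        · symm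
          apply Finset.sum_eq_zero
          intro i hi
          rw [if_neg]
          intro hd
          exact h ((h3 _ _ _ hd).1.symm.trans (hfin.mem_toFinset.1 hi)) }
  obtain ⟨ψ, hψ, -, -⟩ := exists_hom K s r hfam
  intro h0
  have := hψ a
  rw [h0, map_zero] at this
  have h7 := congrFun (LinearMap.congr_fun this fun _ => (1 : K)) (a, Sum.inr 0)
  rw [hTv] at h7
  simp at h7

open AddMonoidAlgebra in
/-- The `ℤ`-grading, as a homomorphism `x ↦ ∑ₙ xₙ Tⁿ` to Laurent polynomials over the
Leavitt path algebra: vertices have degree `0`, edges `1` and ghost edges `-1`. -/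
theorem exists_grading : ∃ Φ : LeavittPathAlgebra K s r →ₐ[K]
      AddMonoidAlgebra (LeavittPathAlgebra K s r) ℤ,
    (∀ a, Φ (vtx K s r a) = single 0 (vtx K s r a)) ∧
    (∀ i, Φ (edg K s r i) = single 1 (edg K s r i)) ∧
    ∀ i, Φ (gh K s r i) = single (-1) (gh K s r i) := by
  have h := leavittFamily K s r
  refine exists_hom K s r (A := AddMonoidAlgebra (LeavittPathAlgebra K s r) ℤ)
    (v := fun a => single 0 (vtx K s r a)) (e := fun i => single 1 (edg K s r i))
    (g := fun i => single (-1) (gh K s r i)) ?_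
  exact
    { vv := fun a b => by
        rw [single_mul_single, h.vv]
        split_ifs <;> simp
      ve := fun i => by rw [single_mul_single, h.ve, zero_add]
      ev := fun i => by rw [single_mul_single, h.ev, add_zero]
      vg := fun i => by rw [single_mul_single, h.vg, zero_add]
      gv := fun i => by rw [single_mul_single, h.gv, add_zero]
      ck1 := fun i j => by
        rw [single_mul_single, h.ck1]
        split_ifs <;> simp
      one := by
        rw [one_def, h.one]
        exact map_sum (singleAddHom (R := LeavittPathAlgebra K s r) (0 : ℤ)) _ _
      ck2 := fun a hfin hne => by
        simp only [single_mul_single]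
        rw [h.ck2 a hfin hne]
        exact map_sum (singleAddHom (R := LeavittPathAlgebra K s r) (0 : ℤ)) _ _ }

end LPA

/-! ### Semiprimeness -/

section filtration

variable (K : Type*) {V E R : Type*} [Field K] [Ring R] [Algebra K R]

/-- The span of the paths of length `n`, when `v` and `e` belong to a Leavitt family. -/
def pathSpan (v : V → R) (e : E → R) : ℕ → Submodule K R
  | 0 => Submodule.span K (Set.range v)
  | n + 1 => ⨆ i, (pathSpan v e n).map (LinearMap.mulLeft K (e i))

/-- `pathSpan` indexed by `ℤ`, and zero in negative degrees. -/
def pathSpanInt (v : V → R) (e : E → R) : ℤ → Submodule K R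
  | Int.ofNat n => pathSpan K v e n
  | Int.negSucc _ => ⊥

/-- The span of the monomials `p q^*` of degree `n` in which the path `q` has length at
most `b`. -/
def filt (v : V → R) (e g : E → R) : ℕ → ℤ → Submodule K R
  | 0, n => pathSpanInt K v e n
  | b + 1, n => pathSpanInt K v e n ⊔
      ⨆ i, (filt v e g b (n + 1)).map (LinearMap.mulRight K (g i))

end filtration

namespace LeavittFamily

section filtration

variable {K : Type*} {V E R : Type*} [Field K] [Ring R] [Algebra K R]
  {s r : E → V} {v : V → R} {e g : E → R}

theorem vert_mem (a : V) : v a ∈ pathSpan K v e 0 := Submodule.subset_span ⟨a, rfl⟩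

theorem edge_mul_mem (i : E) {n : ℕ} {x : R} (hx : x ∈ pathSpan K v e n) :
    e i * x ∈ pathSpan K v e (n + 1) :=
  Submodule.mem_iSup_of_mem i ⟨x, hx, rfl⟩

theorem pathSpan_zero_induction {P : R → Prop} (hv : ∀ a, P (v a)) (h0 : P 0)
    (hadd : ∀ x y, P x → P y → P (x + y)) (hk : ∀ (k : K) x, P x → P (k • x)) {x : R}
    (hx : x ∈ pathSpan K v e 0) : P x := by
  induction hx using Submodule.span_induction with
  | mem x hx => obtain ⟨a, rfl⟩ := hx; exact hv a
  | zero => exact h0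
  | add x y _ _ hx hy => exact hadd x y hx hy
  | smul k x _ hx => exact hk k x hx

theorem pathSpan_succ_induction {n : ℕ} {P : R → Prop}
    (he : ∀ i, ∀ y ∈ pathSpan K v e n, P (e i * y)) (h0 : P 0)
    (hadd : ∀ x y, P x → P y → P (x + y)) {x : R}
    (hx : x ∈ pathSpan K v e (n + 1)) : P x := by
  refine Submodule.iSup_induction _ (motive := P) hx ?_ h0 hadd
  rintro i _ ⟨y, hy, rfl⟩
  exact he i y hy

theorem pathInt_le_filt (b : ℕ) (n : ℤ) : pathSpanInt K v e n ≤ filt K v e g b n := by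
  cases b with
  | zero => exact le_rfl
  | succ b => exact le_sup_left

theorem mul_ghost_mem_filt (j : E) {b : ℕ} {n : ℤ} {x : R} (hx : x ∈ filt K v e g b (n + 1)) :
    x * g j ∈ filt K v e g (b + 1) n :=
  Submodule.mem_sup_right (Submodule.mem_iSup_of_mem j ⟨x, hx, rfl⟩)

theorem filt_le_succ (b : ℕ) : ∀ n : ℤ, filt K v e g b n ≤ filt K v e g (b + 1) n := by
  induction b with
  | zero => exact fun n => le_sup_left
  | succ b ih => exact fun n => sup_le_sup_left (iSup_mono fun i => Submodule.map_mono (ih _)) _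

theorem filt_mono (n : ℤ) : Monotone fun b => filt K v e g b n :=
  monotone_nat_of_le_succ fun b => filt_le_succ b n

theorem filt_succ_induction {b : ℕ} {n : ℤ} {P : R → Prop}
    (hp : ∀ x ∈ pathSpanInt K v e n, P x)
    (hg : ∀ i, ∀ y ∈ filt K v e g b (n + 1), P (y * g i)) (h0 : P 0)
    (hadd : ∀ x y, P x → P y → P (x + y)) {x : R} (hx : x ∈ filt K v e g (b + 1) n) : P x := by
  obtain ⟨y, hy, z, hz, rfl⟩ := Submodule.mem_sup.1 hx
  refine hadd _ _ (hp y hy) (Submodule.iSup_induction _ (motive := P) hz ?_ h0 hadd)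
  rintro i _ ⟨y, hy, rfl⟩
  exact hg i y hy

variable [Fintype V]

theorem vert_mul_zero (h : LeavittFamily s r v e g) (a : V) {x : R}
    (hx : x ∈ pathSpan K v e 0) : ∃ k : K, v a * x = k • v a ∧ x * v a = k • v a := by
  refine pathSpan_zero_induction (P := fun x => ∃ k : K, v a * x = k • v a ∧ x * v a = k • v a)
    ?_ ?_ ?_ ?_ hx
  · intro b
    by_cases hab : a = b
    · subst hab; exact ⟨1, by simp [h.vv]⟩
    · exact ⟨0, by simp [h.vv, hab, Ne.symm hab]⟩
  · exact ⟨0, by simp⟩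
  · rintro x y ⟨k, hk, hk'⟩ ⟨l, hl, hl'⟩
    exact ⟨k + l, by rw [mul_add, hk, hl, add_smul], by rw [add_mul, hk', hl', add_smul]⟩
  · rintro l x ⟨k, hk, hk'⟩
    exact ⟨l * k, by rw [mul_smul_comm, hk, mul_smul], by rw [smul_mul_assoc, hk', mul_smul]⟩

theorem vert_mul_mem (h : LeavittFamily s r v e g) (a : V) {n : ℕ} {x : R}
    (hx : x ∈ pathSpan K v e n) : v a * x ∈ pathSpan K v e n := by
  cases n with
  | zero =>
    obtain ⟨k, hk, -⟩ := h.vert_mul_zero a hx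
    rw [hk]; exact Submodule.smul_mem _ _ (vert_mem a)
  | succ n =>
    refine pathSpan_succ_induction (P := fun x => v a * x ∈ pathSpan K v e (n + 1)) ?_ ?_ ?_ hx
    · intro i y hy
      rw [← h.ve i, ← mul_assoc, ← mul_assoc, h.vv]
      split_ifs with ha
      · rw [ha, h.ve]; exact edge_mul_mem i hy
      · simp
    · simp
    · intro x y hx hy; rw [mul_add]; exact add_mem hx hy

theorem mul_vert_mem (h : LeavittFamily s r v e g) (a : V) {n : ℕ} :
    ∀ {x : R}, x ∈ pathSpan K v e n → x * v a ∈ pathSpan K v e n := by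
  induction n with
  | zero =>
    intro x hx
    obtain ⟨k, -, hk⟩ := h.vert_mul_zero a hx
    rw [hk]; exact Submodule.smul_mem _ _ (vert_mem a)
  | succ n ih =>
    intro x hx
    refine pathSpan_succ_induction (P := fun x => x * v a ∈ pathSpan K v e (n + 1)) ?_ ?_ ?_ hx
    · intro i y hy; rw [mul_assoc]; exact edge_mul_mem i (ih hy)
    · simp
    · intro x y hx hy; rw [add_mul]; exact add_mem hx hy

theorem mul_edge_mem (h : LeavittFamily s r v e g) (j : E) {n : ℕ} :
    ∀ {x : R}, x ∈ pathSpan K v e n → x * e j ∈ pathSpan K v e (n + 1) := by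
  induction n with
  | zero =>
    intro x hx
    obtain ⟨k, -, hk⟩ := h.vert_mul_zero (s j) hx
    rw [← h.ve j, ← mul_assoc, hk, smul_mul_assoc, h.ve, ← h.ev]
    exact Submodule.smul_mem _ _ (edge_mul_mem j (vert_mem _))
  | succ n ih =>
    intro x hx
    refine pathSpan_succ_induction (P := fun x => x * e j ∈ pathSpan K v e (n + 1 + 1)) ?_ ?_ ?_ hx
    · intro i y hy; rw [mul_assoc]; exact edge_mul_mem i (ih hy)
    · simp
    · intro x y hx hy; rw [add_mul]; exact add_mem hx hy

theorem ghost_mul_mem (h : LeavittFamily s r v e g) (j : E) {n : ℕ} {x : R}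
    (hx : x ∈ pathSpan K v e (n + 1)) : g j * x ∈ pathSpan K v e n := by
  refine pathSpan_succ_induction (P := fun x => g j * x ∈ pathSpan K v e n) ?_ ?_ ?_ hx
  · intro i y hy
    rw [← mul_assoc, h.ck1]
    split_ifs
    · exact h.vert_mul_mem _ hy
    · simp
  · simp
  · intro x y hx hy; rw [mul_add]; exact add_mem hx hy

/-- The relation `x = ∑ e e^* x` on combinations of paths of positive length. -/
theorem eq_zero_of_ghost_mul (h : LeavittFamily s r v e g) {n : ℕ} {x : R}
    (hx : x ∈ pathSpan K v e (n + 1)) (h0 : ∀ i, g i * x = 0) : x = 0 := by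
  obtain ⟨z, hz, rfl⟩ := (Submodule.mem_iSup_iff_exists_finsupp _ _).1 hx
  rw [Finsupp.sum]
  apply Finset.sum_eq_zero
  intro i hi
  choose y hy hyz using hz
  have key : ∀ j, g i * z j = if i = j then g i * z i else 0 := by
    intro j
    split_ifs with hij
    · rw [hij]
    · rw [← hyz j, LinearMap.mulLeft_apply, ← mul_assoc, h.ck1_ne hij, zero_mul]
  have h1 := h0 i
  rw [Finsupp.sum, Finset.mul_sum, Finset.sum_congr rfl fun j _ => key j, Finset.sum_ite_eq,
    if_pos hi, ← hyz i, LinearMap.mulLeft_apply, ← mul_assoc, h.ck1_self] at h1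
  rw [← hyz i, LinearMap.mulLeft_apply, ← h.ev i, mul_assoc, h1, mul_zero]

theorem edge_ne_zero (h : LeavittFamily s r v e g) (hv : ∀ a, v a ≠ 0) (i : E) : e i ≠ 0 := by
  intro h0
  apply hv (r i)
  rw [← h.ck1_self, h0, mul_zero]

/-- Right multiplication by an edge is injective on combinations of paths ending at its
source. -/
theorem mul_vert_eq_zero (h : LeavittFamily s r v e g) (hv : ∀ a, v a ≠ 0) (j : E) {n : ℕ} :
    ∀ {x : R}, x ∈ pathSpan K v e n → x * e j = 0 → x * v (s j) = 0 := by
  induction n with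
  | zero =>
    intro x hx h0
    obtain ⟨k, -, hk⟩ := h.vert_mul_zero (s j) hx
    rw [← h.ve j, ← mul_assoc, hk, smul_mul_assoc, h.ve] at h0
    rcases smul_eq_zero.1 h0 with h1 | h1
    · rw [hk, h1, zero_smul]
    · exact absurd h1 (h.edge_ne_zero hv j)
  | succ n ih =>
    intro x hx h0
    apply h.eq_zero_of_ghost_mul (h.mul_vert_mem _ hx)
    intro i
    rw [← mul_assoc]
    apply ih (h.ghost_mul_mem i hx)
    rw [mul_assoc, h0, mul_zero]

theorem eq_zero_of_mem_pathSpan (h : LeavittFamily s r v e g) (hv : ∀ a, v a ≠ 0) {n : ℕ} :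
    ∀ {x : R}, x ∈ pathSpan K v e n → (∀ y, x * y * x = 0) → x = 0 := by
  induction n with
  | zero =>
    intro x hx hq
    have hvx : ∀ a, v a * x = 0 := by
      intro a
      obtain ⟨k, hk, -⟩ := h.vert_mul_zero a hx
      have h1 := congrArg (v a * ·) (hq (v a))
      simp only [mul_zero] at h1
      rw [← mul_assoc, ← mul_assoc, hk, smul_mul_assoc, h.idem, smul_mul_assoc, hk, smul_smul]
        at h1
      rcases smul_eq_zero.1 h1 with h2 | h2
      · rw [hk, mul_self_eq_zero.1 h2, zero_smul]
      · exact absurd h2 (hv a)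
    rw [← one_mul x, h.one, Finset.sum_mul]
    exact Finset.sum_eq_zero fun a _ => hvx a
  | succ n ih =>
    intro x hx hq
    apply h.eq_zero_of_ghost_mul hx
    intro i
    apply ih (h.ghost_mul_mem i hx)
    intro y
    have : g i * x * y * (g i * x) = g i * (x * (y * g i) * x) := by simp only [mul_assoc]
    rw [this, hq, mul_zero]

theorem pathInt_mul_vert (h : LeavittFamily s r v e g) (a : V) {n : ℤ} {x : R}
    (hx : x ∈ pathSpanInt K v e n) : x * v a ∈ pathSpanInt K v e n := by
  cases n with
  | ofNat n => exact h.mul_vert_mem a hx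
  | negSucc n =>
    have : x = 0 := (Submodule.mem_bot K).1 hx
    rw [this, zero_mul]; exact zero_mem _

theorem pathInt_mul_edge (h : LeavittFamily s r v e g) (j : E) {n : ℤ} {x : R}
    (hx : x ∈ pathSpanInt K v e n) : x * e j ∈ pathSpanInt K v e (n + 1) := by
  cases n with
  | ofNat n => exact h.mul_edge_mem j hx
  | negSucc n =>
    have : x = 0 := (Submodule.mem_bot K).1 hx
    rw [this, zero_mul]; exact zero_mem _

theorem filt_mul_vert (h : LeavittFamily s r v e g) (a : V) {b : ℕ} {n : ℤ} {x : R}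
    (hx : x ∈ filt K v e g b n) : x * v a ∈ filt K v e g b n := by
  cases b with
  | zero => exact h.pathInt_mul_vert a hx
  | succ b =>
    refine filt_succ_induction (P := fun x => x * v a ∈ filt K v e g (b + 1) n) ?_ ?_ ?_ ?_ hx
    · intro x hx; exact pathInt_le_filt _ _ (h.pathInt_mul_vert a hx)
    · intro i y hy
      rw [← h.gv i, mul_assoc, mul_assoc, h.vv]
      split_ifs with ha
      · rw [h.gv]; exact mul_ghost_mem_filt i hy
      · simp
    · simp
    · intro x y hx hy; rw [add_mul]; exact add_mem hx hy

/-- Right multiplication by an edge shortens the ghost part. -/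
theorem filt_succ_mul_edge (h : LeavittFamily s r v e g) (j : E) {b : ℕ} {n : ℤ} {x : R}
    (hx : x ∈ filt K v e g (b + 1) n) : x * e j ∈ filt K v e g b (n + 1) := by
  refine filt_succ_induction (P := fun x => x * e j ∈ filt K v e g b (n + 1)) ?_ ?_ ?_ ?_ hx
  · intro x hx; exact pathInt_le_filt _ _ (h.pathInt_mul_edge j hx)
  · intro i y hy
    rw [mul_assoc, h.ck1]
    split_ifs
    · exact h.filt_mul_vert _ hy
    · simp
  · simp
  · intro x y hx hy; rw [add_mul]; exact add_mem hx hy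

theorem filt_mul_edge (h : LeavittFamily s r v e g) (j : E) {b : ℕ} {n : ℤ} {x : R}
    (hx : x ∈ filt K v e g b n) : x * e j ∈ filt K v e g b (n + 1) :=
  h.filt_succ_mul_edge j (filt_le_succ b n hx)

theorem eq_zero_of_mem_pathInt (h : LeavittFamily s r v e g) (hv : ∀ a, v a ≠ 0) {n : ℤ} {x : R}
    (hx : x ∈ pathSpanInt K v e n) (hq : ∀ y, x * y * x = 0) : x = 0 := by
  cases n with
  | ofNat n => exact h.eq_zero_of_mem_pathSpan hv hx hq
  | negSucc n => exact (Submodule.mem_bot K).1 hx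

theorem pathInt_mul_vert_eq_zero (h : LeavittFamily s r v e g) (hv : ∀ a, v a ≠ 0) (j : E)
    {n : ℤ} {x : R} (hx : x ∈ pathSpanInt K v e n) (h0 : x * e j = 0) : x * v (s j) = 0 := by
  cases n with
  | ofNat n => exact h.mul_vert_eq_zero hv j hx h0
  | negSucc n =>
    have : x = 0 := (Submodule.mem_bot K).1 hx
    rw [this, zero_mul]

/-- A homogeneous element `x` with `x R x = 0` vanishes, by induction on the length of the ghost
parts of its monomials. The elements `x f`, for edges `f`, vanish by induction. At a regular
vertex `a` this gives `x a = 0` by the second Cuntz-Krieger relation. At a sink only real paths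
contribute to `x a`. At an infinite emitter some edge does not occur in `x`, and multiplying by
it isolates the contribution of the real paths. -/
theorem eq_zero_of_mem_filt (h : LeavittFamily s r v e g) (hv : ∀ a, v a ≠ 0) {b : ℕ} :
    ∀ {n : ℤ} {x : R}, x ∈ filt K v e g b n → (∀ y, x * y * x = 0) → x = 0 := by
  induction b with
  | zero => exact fun hx hq => h.eq_zero_of_mem_pathInt hv hx hq
  | succ b ih =>
    intro n x hx hq
    have hqr : ∀ c y, (x * c) * y * (x * c) = 0 := fun c y => by
      have : (x * c) * y * (x * c) = (x * (c * y) * x) * c := by simp only [mul_assoc]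
      rw [this, hq, zero_mul]
    have hxe : ∀ j, x * e j = 0 := fun j => ih (h.filt_succ_mul_edge j hx) (hqr _)
    suffices hxv : ∀ a, x * v a = 0 by
      rw [← mul_one x, h.one, Finset.mul_sum]
      exact Finset.sum_eq_zero fun a _ => hxv a
    intro a
    obtain ⟨x', hx', w, hw, hxw⟩ := Submodule.mem_sup.1 hx
    obtain ⟨z, hz, rfl⟩ := (Submodule.mem_iSup_iff_exists_finsupp _ _).1 hw
    choose y hy hyz using hz
    have hyz' : ∀ i, z i = y i * g i := fun i => (hyz i).symm
    have hxsum : x = x' + ∑ i ∈ z.support, z i := hxw.symm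
    have hze : ∀ i j, i ≠ j → z i * e j = 0 := fun i j hij => by
      rw [hyz', mul_assoc, h.ck1_ne hij, mul_zero]
    have hzv : ∀ i, s i ≠ a → z i * v a = 0 := fun i hi => by
      rw [hyz', ← h.gv, mul_assoc, mul_assoc, h.vv, if_neg hi, mul_zero, mul_zero]
    by_cases hne : {i : E | s i = a}.Nonempty
    swap
    · have e1 : x * v a = x' * v a := by
        rw [hxsum, add_mul, Finset.sum_mul, Finset.sum_eq_zero fun i _ => hzv i fun hi =>
          hne ⟨i, hi⟩, add_zero]
      rw [e1]
      exact h.eq_zero_of_mem_pathInt hv (h.pathInt_mul_vert a hx') (e1 ▸ hqr _)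
    by_cases hfin : {i : E | s i = a}.Finite
    · rw [h.ck2 a hfin hne, Finset.mul_sum]
      exact Finset.sum_eq_zero fun i _ => by rw [← mul_assoc, hxe, zero_mul]
    obtain ⟨f, hf, hfS⟩ := Set.Infinite.exists_notMem_finset hfin z.support
    have hf' : s f = a := hf
    have hx'v : x' * v a = 0 := by
      have h1 := hxe f
      rw [hxsum, add_mul, Finset.sum_mul, Finset.sum_eq_zero fun i hi => hze i f fun hif =>
        hfS (hif ▸ hi), add_zero] at h1
      rw [← hf']
      exact h.pathInt_mul_vert_eq_zero hv f hx' h1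
    rw [hxsum, add_mul, hx'v, zero_add, Finset.sum_mul]
    apply Finset.sum_eq_zero
    intro i hi
    by_cases hia : s i = a
    · have h1 := hxe i
      have h2 : x' * e i = 0 := by rw [← h.ve, hia, ← mul_assoc, hx'v, zero_mul]
      rw [hxsum, add_mul, h2, zero_add, Finset.sum_mul, Finset.sum_eq_single i
        (fun j _ hj => hze j i hj) (fun hn => absurd hi hn), hyz', mul_assoc, h.ck1_self] at h1
      rw [hyz', ← h.vg, ← mul_assoc (y i), h1, zero_mul, zero_mul]
    · exact hzv i hia

end filtration

section grading

open AddMonoidAlgebra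

variable {K : Type*} {V E R : Type*} [Field K] [Ring R] [Algebra K R]
  {s r : E → V} {v : V → R} {e g : E → R}

theorem grading_pathSpan (Φ : R →ₐ[K] AddMonoidAlgebra R ℤ) (hΦv : ∀ a, Φ (v a) = single 0 (v a))
    (hΦe : ∀ i, Φ (e i) = single 1 (e i)) {n : ℕ} :
    ∀ {x : R}, x ∈ pathSpan K v e n → Φ x = single (n : ℤ) x := by
  induction n with
  | zero =>
    intro x hx
    refine pathSpan_zero_induction (P := fun x => Φ x = single ((0 : ℕ) : ℤ) x) ?_ ?_ ?_ ?_ hx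
    · exact hΦv
    · simp
    · intro x y hx hy; rw [map_add, hx, hy, single_add]
    · intro k x hx; rw [map_smul, hx, smul_single]
  | succ n ih =>
    intro x hx
    refine pathSpan_succ_induction (P := fun x => Φ x = single ((n + 1 : ℕ) : ℤ) x) ?_ ?_ ?_ hx
    · intro i y hy
      rw [map_mul, hΦe, ih hy, single_mul_single]
      congr 1; push_cast; ring
    · simp
    · intro x y hx hy; rw [map_add, hx, hy, single_add]

theorem grading_filt (Φ : R →ₐ[K] AddMonoidAlgebra R ℤ) (hΦv : ∀ a, Φ (v a) = single 0 (v a))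
    (hΦe : ∀ i, Φ (e i) = single 1 (e i)) (hΦg : ∀ i, Φ (g i) = single (-1) (g i)) {b : ℕ} :
    ∀ {n : ℤ} {x : R}, x ∈ filt K v e g b n → Φ x = single n x := by
  have hP : ∀ {n : ℤ} {x : R}, x ∈ pathSpanInt K v e n → Φ x = single n x := by
    intro n x hx
    cases n with
    | ofNat n => exact grading_pathSpan Φ hΦv hΦe hx
    | negSucc n =>
      have : x = 0 := (Submodule.mem_bot K).1 hx
      rw [this]; simp
  induction b with
  | zero => exact hP
  | succ b ih =>
    intro n x hx
    refine filt_succ_induction (P := fun x => Φ x = single n x) ?_ ?_ ?_ ?_ hx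
    · exact fun x hx => hP hx
    · intro i y hy
      rw [map_mul, hΦg, ih hy, single_mul_single]
      congr 1; ring
    · simp
    · intro x y hx hy; rw [map_add, hx, hy, single_add]

variable [Fintype V]

theorem iSup_filt_eq_top (h : LeavittFamily s r v e g) (hgen : GeneratesAlgebra K v e g) :
    ⨆ p : ℕ × ℤ, filt K v e g p.1 p.2 = ⊤ := by
  have hmem : ∀ {b n x}, x ∈ filt K v e g b n → x ∈ ⨆ p : ℕ × ℤ, filt K v e g p.1 p.2 :=
    fun {b n x} hx => Submodule.mem_iSup_of_mem (p := fun p : ℕ × ℤ => filt K v e g p.1 p.2)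
      (b, n) hx
  have hlift : ∀ c : R, (∀ b n, ∀ x ∈ filt K v e g b n,
        x * c ∈ ⨆ p : ℕ × ℤ, filt K v e g p.1 p.2) →
      ∀ x ∈ ⨆ p : ℕ × ℤ, filt K v e g p.1 p.2, x * c ∈ ⨆ p : ℕ × ℤ, filt K v e g p.1 p.2 := by
    intro c hc x hx
    refine Submodule.iSup_induction _ (motive := fun x => x * c ∈ _) hx
      (fun p x hx => hc p.1 p.2 x hx) ?_ ?_
    · rw [zero_mul]; exact zero_mem _
    · intro x y hx hy; rw [add_mul]; exact add_mem hx hy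
  have hone : (1 : R) ∈ ⨆ p : ℕ × ℤ, filt K v e g p.1 p.2 := by
    rw [h.one]
    exact sum_mem fun a _ => hmem (b := 0) (n := 0) (vert_mem (K := K) (e := e) a)
  rw [eq_top_iff]
  intro y _
  have key : ∀ x ∈ ⨆ p : ℕ × ℤ, filt K v e g p.1 p.2,
      x * y ∈ ⨆ p : ℕ × ℤ, filt K v e g p.1 p.2 := by
    refine hgen.induction (P := fun y => ∀ x ∈ ⨆ p : ℕ × ℤ, filt K v e g p.1 p.2,
      x * y ∈ ⨆ p : ℕ × ℤ, filt K v e g p.1 p.2) ?_ ?_ ?_ ?_ ?_ ?_ y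
    · exact fun a => hlift _ fun b n x hx => hmem (h.filt_mul_vert a hx)
    · exact fun i => hlift _ fun b n x hx => hmem (h.filt_mul_edge i hx)
    · refine fun i => hlift _ fun b n x hx => hmem (b := b + 1) (n := n - 1)
        (mul_ghost_mem_filt i ?_)
      rwa [sub_add_cancel]
    · intro k x hx
      rw [← Algebra.commutes, ← Algebra.smul_def]
      exact Submodule.smul_mem _ _ hx
    · intro y z hy hz x hx; rw [mul_add]; exact add_mem (hy x hx) (hz x hx)
    · intro y z hy hz x hx; rw [← mul_assoc]; exact hz _ (hy x hx)
  simpa using key 1 hone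

/-- An algebra generated by a graded Leavitt family with nonzero vertices is semiprime: if
`x R x = 0` then also `y R y = 0` for the homogeneous component `y` of `x` of highest degree. -/
theorem semiprime (h : LeavittFamily s r v e g) (hgen : GeneratesAlgebra K v e g)
    (hv : ∀ a, v a ≠ 0) (Φ : R →ₐ[K] AddMonoidAlgebra R ℤ)
    (hΦv : ∀ a, Φ (v a) = single 0 (v a)) (hΦe : ∀ i, Φ (e i) = single 1 (e i))
    (hΦg : ∀ i, Φ (g i) = single (-1) (g i)) : SemiprimeRing R := by
  have htop : ∀ x : R, x ∈ ⨆ p : ℕ × ℤ, filt K v e g p.1 p.2 := fun x => by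
    rw [h.iSup_filt_eq_top hgen]; exact Submodule.mem_top
  have hcoeff : ∀ x : R, ∀ n : ℤ, ∃ b, (Φ x).coeff n ∈ filt K v e g b n := by
    intro x
    refine Submodule.iSup_induction _
      (motive := fun x => ∀ n : ℤ, ∃ b, (Φ x).coeff n ∈ filt K v e g b n) (htop x) ?_ ?_ ?_
    · intro p x hx n
      rw [grading_filt Φ hΦv hΦe hΦg hx, coeff_single, Finsupp.single_apply]
      split_ifs with hn
      · subst hn; exact ⟨p.1, hx⟩
      · exact ⟨0, zero_mem _⟩
    · intro n; exact ⟨0, by simp⟩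
    · intro x y hx hy n
      obtain ⟨b, hb⟩ := hx n
      obtain ⟨c, hc⟩ := hy n
      refine ⟨max b c, ?_⟩
      rw [map_add, coeff_add, Finsupp.add_apply]
      exact add_mem (filt_mono n (le_max_left b c) hb) (filt_mono n (le_max_right b c) hc)
  have hsum : ∀ x : R, (Φ x).coeff.sum (fun _ z => z) = x := by
    intro x
    refine Submodule.iSup_induction _
      (motive := fun x => (Φ x).coeff.sum (fun _ z => z) = x) (htop x) ?_ ?_ ?_
    · intro p x hx
      rw [grading_filt Φ hΦv hΦe hΦg hx, coeff_single, Finsupp.sum_single_index rfl]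
    · simp
    · intro x y hx hy
      rw [map_add, coeff_add, Finsupp.sum_add_index' (fun _ => rfl) (fun _ _ _ => rfl), hx, hy]
  intro x hq
  by_contra hx0
  have hne : (Φ x).coeff.support.Nonempty := by
    rw [Finsupp.support_nonempty_iff]
    intro h0
    apply hx0
    rw [← hsum x, h0, Finsupp.sum_zero_index]
  set m := (Φ x).coeff.support.max' hne with hm
  have hmax : ∀ k, (Φ x).coeff k ≠ 0 → k ≤ m := fun k hk =>
    Finset.le_max' _ _ (Finsupp.mem_support_iff.2 hk)
  have hmne : (Φ x).coeff m ≠ 0 := Finsupp.mem_support_iff.1 (Finset.max'_mem _ hne)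
  apply hmne
  obtain ⟨b, hb⟩ := hcoeff x m
  refine h.eq_zero_of_mem_filt hv hb fun y => ?_
  refine Submodule.iSup_induction _
    (motive := fun y => (Φ x).coeff m * y * (Φ x).coeff m = 0) (htop y) ?_ ?_ ?_
  · rintro ⟨c, k⟩ y hy
    have h1 : Φ x * single k y * Φ x = 0 := by
      rw [← grading_filt Φ hΦv hΦe hΦg hy, ← map_mul, ← map_mul, hq, map_zero]
    have hc : ∀ j, (Φ x * single k y).coeff (j + k) = (Φ x).coeff j * y := fun j =>
      coeff_mul_single_eq_coeff_mul _ fun i _ => add_left_inj k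
    have hu : UniqueAdd (Φ x * single k y).coeff.support (Φ x).coeff.support (m + k) m := by
      intro i j hi hj hij
      rw [Finsupp.mem_support_iff] at hi hj
      have hi' : i - k ≤ m := hmax _ fun h0 => hi (by
        have := hc (i - k)
        rwa [sub_add_cancel, h0, zero_mul] at this)
      have hj' := hmax j hj
      constructor <;> omega
    have h2 := coeff_mul_add_of_uniqueAdd hu
    rw [h1, hc] at h2
    simpa using h2.symm
  · simp
  · intro y z hy hz; rw [mul_add, add_mul, hy, hz, add_zero]

end grading

end LeavittFamily

/-- in a 6-torsion-free unital Leavitt path algebra, every solvable normal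
subgroup of the unit group is central. -/
theorem stmt7 (K V E : Type*) [Field K] [Fintype V] (s r : E → V)
    (htf : ∀ x : LPA.LeavittPathAlgebra K s r, (6 : ℕ) • x = 0 → x = 0)
    (G : Subgroup (LPA.LeavittPathAlgebra K s r)ˣ) (hGnormal : G.Normal)
    (hGsolv : IsSolvable G) :
    ∀ g ∈ G, ∀ x : LPA.LeavittPathAlgebra K s r,
      (g : LPA.LeavittPathAlgebra K s r) * x = x * (g : LPA.LeavittPathAlgebra K s r) := by
  have h := LPA.leavittFamily K s r
  have hgen := LPA.generates K s r
  obtain ⟨Φ, hΦv, hΦe, hΦg⟩ := LPA.exists_grading K s r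
  have hsemi := h.semiprime hgen (LPA.vtx_ne_zero K s r) Φ hΦv hΦe hΦg
  exact solvable_normal_central hsemi htf (h.bracket_mem hgen) G hGnormal hGsolv
end
end

section
/- Let A_n (n ≥ 2) be the oriented line graph with vertices v_1, …, v_n and edges e_i from v_i to v_{i+1} for 1 ≤ i ≤ n−1, and let K be a non-absolute field. Fix 1 ≤ i < j ≤ n and α, β ∈ K, and set a = 1 + α e_i e_{i+1}⋯e_{j−1}, b = 1 + α e_{j−1}^*⋯e_{i+1}^* e_i^*, c = a + (β−1) v_i + (β^{-1}−1) v_j, d = b + (β−1) v_i + (β^{-1}−1) v_j in L_K(A_n). Then: (1) if char K = 0 and α is equal to 2 or transcendental over the prime subfield ℚ, then ⟨a, b⟩ is a non-cyclic free subgroup of L_K(A_n)^×; (2) if char K = t > 0 and α, β are algebraically independent over the prime subfield 𝔽_t, then ⟨c, d⟩ is a non-cyclic free subgroup of L_K(A_n)^×. -/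
/-!
The algebra `L_K(A_n)` maps to `n × n` matrices over `K` by sending vertices, edges and ghost
edges to matrix units (`LineFree.rep`). The path from `v_i` to `v_j` goes to the matrix unit
`E_ij` and the ghost path to `E_ji`, so on the span of the `i`-th and `j`-th basis vectors `c`
and `d` act as `C = !![β, α; 0, β⁻¹]` and `D = !![β, 0; α, β⁻¹]`; the elements `a` and `b` are
the case `β = 1`. It therefore suffices to prove that no nonempty reduced word in `C`, `D` is
the identity (`LineFree.freePair_of_run`).

The matrices `β C`, `β C⁻¹`, `β D`, `β D⁻¹` have entries in `ℤ[α, β]`, so a word of length `k`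
equal to the identity makes its scaled version equal to `β ^ k`, an identity between integer polynomials in
`α`, `β`. Under the transcendence hypotheses the identity survives every specialization of
`α`, `β`, and one specialization is excluded by ping-pong in each case:

* for `β = 1` and `α = 2`, the matrices are Sanov's, and ping-pong takes place on the four
  double cones in `ℤ²` bounded by the axes and the diagonals (`LineFree.run_two`);
* for `α = X` and `β = X ^ 2` in `K[X]`, in any characteristic, ping-pong is played with the
  difference of the degrees of the two coordinates (`LineFree.run_poly`).
-/

noncomputable section
open scoped Classical
universe u

namespace LPA

variable (K : Type*) [Field K]

/-- Source map of the oriented line graph `A_n`: vertices `0, …, n-1` (`0`-indexed),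
edge `k` goes from vertex `k` to vertex `k+1`. -/
def lineS (n : ℕ) : Fin (n - 1) → Fin n := fun k => ⟨k.1, by have := k.2; omega⟩

/-- Range map of the oriented line graph `A_n`. -/
def lineR (n : ℕ) : Fin (n - 1) → Fin n := fun k => ⟨k.1 + 1, by have := k.2; omega⟩

/-- The `k`-th vertex (`0`-indexed) of `A_n` in `L_K(A_n)` (junk value `0` out of range). -/
def lineVtx (n k : ℕ) : LeavittPathAlgebra K (lineS n) (lineR n) :=
  if h : k < n then vtx K (lineS n) (lineR n) ⟨k, h⟩ else 0

/-- The `k`-th edge (`0`-indexed) of `A_n` in `L_K(A_n)` (junk value `0` out of range). -/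
def lineEdg (n k : ℕ) : LeavittPathAlgebra K (lineS n) (lineR n) :=
  if h : k < n - 1 then edg K (lineS n) (lineR n) ⟨k, h⟩ else 0

/-- The `k`-th ghost edge (`0`-indexed) of `A_n` in `L_K(A_n)`. -/
def lineGh (n k : ℕ) : LeavittPathAlgebra K (lineS n) (lineR n) :=
  if h : k < n - 1 then gh K (lineS n) (lineR n) ⟨k, h⟩ else 0

/-- The path `e_i e_{i+1} ⋯ e_{j-1}` (`1`-indexed labels) in `L_K(A_n)`. -/
def linePath (n i j : ℕ) : LeavittPathAlgebra K (lineS n) (lineR n) :=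
  ((List.range (j - i)).map (fun k => lineEdg K n (i - 1 + k))).prod

/-- The ghost path `e_{j-1}^* ⋯ e_{i+1}^* e_i^*` (`1`-indexed labels) in `L_K(A_n)`. -/
def lineGhostPath (n i j : ℕ) : LeavittPathAlgebra K (lineS n) (lineR n) :=
  ((List.range (j - i)).map (fun k => lineGh K n (j - 2 - k))).prod

end LPA

namespace LineFree

/-! ### Words acting on pairs -/

/-- The scaled action of a letter of the free group on column vectors over a commutative
ring. With `C = !![β, α; 0, β⁻¹]` and `D = !![β, 0; α, β⁻¹]`, the letters `(0, true)`,
`(0, false)`, `(1, true)`, `(1, false)` act through `β • C`, `β • C⁻¹`, `β • D`, `β • D⁻¹`.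
The scaling by `β` removes all inverses, so that the entries are polynomials in `α` and `β`. -/
def step {R : Type*} [CommRing R] (α β : R) : Fin 2 × Bool → R × R → R × R
  | (0, true), p => (β ^ 2 * p.1 + α * β * p.2, p.2)
  | (0, false), p => (p.1 - α * β * p.2, β ^ 2 * p.2)
  | (1, true), p => (β ^ 2 * p.1, α * β * p.1 + p.2)
  | (1, false), p => (p.1, β ^ 2 * p.2 - α * β * p.1)

/-- The scaled action of a word, its rightmost letter acting first. -/
def run {R : Type*} [CommRing R] (α β : R) (L : List (Fin 2 × Bool)) (p : R × R) : R × R :=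
  L.foldr (step α β) p

lemma run_cons {R : Type*} [CommRing R] (α β : R) (x : Fin 2 × Bool)
    (L : List (Fin 2 × Bool)) (p : R × R) :
    run α β (x :: L) p = step α β x (run α β L p) := rfl

/-- Words act by polynomials with integer coefficients, so the action commutes with ring
homomorphisms; this is what allows specializing `α` and `β`. -/
lemma run_map {R S : Type*} [CommRing R] [CommRing S] (f : R →+* S) (α β : R)
    (L : List (Fin 2 × Bool)) (p : R × R) :
    run (f α) (f β) L (f p.1, f p.2) = (f (run α β L p).1, f (run α β L p).2) := by
  induction L with
  | nil => rfl
  | cons x L ih =>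
    rw [run_cons, run_cons, ih]
    obtain ⟨i, b⟩ := x
    fin_cases i <;> cases b <;> simp [step]

/-- Ping-pong for words: each letter has a region `S x`, which it reaches from every other
region except that of its inverse. The starting vector `p x` depends on the first letter to
act; the regions need not be disjoint. -/
lemma ping_pong {R : Type*} [CommRing R] {α β : R} (S : Fin 2 × Bool → R × R → Prop)
    (p : Fin 2 × Bool → R × R) (h0 : ∀ x, S x (step α β x (p x)))
    (h : ∀ x y : Fin 2 × Bool, (x.1 = y.1 → x.2 = y.2) → ∀ v, S y v → S x (step α β x v)) :
    ∀ L : List (Fin 2 × Bool), FreeGroup.IsReduced L → ∀ hL : L ≠ [],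
      S (L.head hL) (run α β L (p (L.getLast hL))) := by
  intro L
  induction L with
  | nil => intro _ hL; exact absurd rfl hL
  | cons x L ih =>
    intro hr _
    cases L with
    | nil => exact h0 x
    | cons y L =>
      rw [FreeGroup.isReduced_cons_cons] at hr
      have := h x y hr.1 _ (ih hr.2 (by simp))
      simpa [run_cons] using this

/-- The ping-pong regions for Sanov's matrices `!![1, 2; 0, 1]` and `!![1, 0; 2, 1]`: the four
pairs of opposite open cones cut out of the plane by the coordinate axes and the diagonals. -/
def sanovRegion : Fin 2 × Bool → ℤ × ℤ → Prop
  | (0, true), v => (0 < v.2 ∧ v.2 < v.1) ∨ (v.1 < v.2 ∧ v.2 < 0)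
  | (0, false), v => (0 < v.2 ∧ v.2 < -v.1) ∨ (-v.1 < v.2 ∧ v.2 < 0)
  | (1, true), v => (0 < v.1 ∧ v.1 < v.2) ∨ (v.2 < v.1 ∧ v.1 < 0)
  | (1, false), v => (0 < v.1 ∧ v.1 < -v.2) ∨ (-v.2 < v.1 ∧ v.1 < 0)

/-- Sanov's theorem: no nonempty reduced word in `!![1, 2; 0, 1]` and `!![1, 0; 2, 1]` fixes
both basis vectors. -/
lemma run_two (L : List (Fin 2 × Bool)) (hr : FreeGroup.IsReduced L) (hL : L ≠ []) :
    ∃ p : ℤ × ℤ, run (2 : ℤ) 1 L p ≠ p := by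
  -- Start from the basis vector that the rightmost letter moves.
  let p : Fin 2 × Bool → ℤ × ℤ := fun x => if x.1 = 0 then (0, 1) else (1, 0)
  have key := ping_pong (α := (2 : ℤ)) (β := 1) sanovRegion p
    (by
      rintro ⟨i, b⟩
      fin_cases i <;> cases b <;> simp [p, step, sanovRegion])
    (by
      rintro ⟨i, b⟩ ⟨i', b'⟩ hne ⟨u, v⟩ hv
      fin_cases i <;> cases b <;> fin_cases i' <;> cases b' <;>
        simp [step, sanovRegion] at hne hv ⊢ <;> omega) L hr hL
  refine ⟨p (L.getLast hL), fun h => ?_⟩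
  rw [h] at key
  revert key
  generalize L.head hL = x
  generalize L.getLast hL = y
  obtain ⟨i, b⟩ := x
  obtain ⟨i', b'⟩ := y
  fin_cases i <;> cases b <;> fin_cases i' <;> simp [p, sanovRegion]

open Polynomial in
/-- The ping-pong regions for `α = X`, `β = X ^ 2`, with `δ = deg v.1 - deg v.2` measuring the
position of the line spanned by `v`: the letters contract towards the directions with
`δ = ∞`, `-1`, `1`, `-∞` respectively. -/
def degreeRegion {K : Type*} [Field K] (x : Fin 2 × Bool) (v : K[X] × K[X]) : Prop :=
  ∃ a b : ℕ, v.1.degree = a ∧ v.2.degree = b ∧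
    match x with
    | (0, true) => b + 2 ≤ a
    | (0, false) => b = a + 1
    | (1, true) => a = b + 1
    | (1, false) => a + 2 ≤ b

open Polynomial in
/-- The degrees of all coordinates that `step` can produce for `α = X`, `β = X ^ 2`, in
the cases where the two summands have different degrees, so that nothing cancels. -/
lemma degree_combine {K : Type*} [Field K] (u v : K[X]) (a b : ℕ) (hu : u.degree = a)
    (hv : v.degree = b) :
    (b + 3 < a + 4 → (((X ^ 2) ^ 2 * u + X * X ^ 2 * v : K[X]).degree = (a + 4 : ℕ))) ∧
    (a + 4 < b + 3 → (((X ^ 2) ^ 2 * u + X * X ^ 2 * v : K[X]).degree = (b + 3 : ℕ))) ∧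
    (a < b + 3 → ((u - X * X ^ 2 * v : K[X]).degree = (b + 3 : ℕ))) ∧
    (a < b + 3 → ((X * X ^ 2 * v + u : K[X]).degree = (b + 3 : ℕ))) ∧
    (b + 3 < a + 4 → (((X ^ 2) ^ 2 * u - X * X ^ 2 * v : K[X]).degree = (a + 4 : ℕ))) ∧
    (a + 4 < b + 3 → (((X ^ 2) ^ 2 * u - X * X ^ 2 * v : K[X]).degree = (b + 3 : ℕ))) ∧
    ((X ^ 2) ^ 2 * u : K[X]).degree = (a + 4 : ℕ) := by
  have h4 : ((X ^ 2) ^ 2 * u : K[X]).degree = (a + 4 : ℕ) := by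
    rw [← pow_mul, degree_mul, degree_X_pow, hu]; norm_cast; omega
  have h3 : (X * X ^ 2 * v : K[X]).degree = (b + 3 : ℕ) := by
    rw [← pow_succ', degree_mul, degree_X_pow, hv]; norm_cast; omega
  refine ⟨fun h => ?_, fun h => ?_, fun h => ?_, fun h => ?_, fun h => ?_, fun h => ?_, h4⟩
  · rw [degree_add_eq_left_of_degree_lt (by rw [h3, h4]; exact_mod_cast h), h4]
  · rw [degree_add_eq_right_of_degree_lt (by rw [h3, h4]; exact_mod_cast h), h3]
  · rw [degree_sub_eq_right_of_degree_lt (by rw [h3, hu]; exact_mod_cast h), h3]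
  · rw [degree_add_eq_left_of_degree_lt (by rw [h3, hu]; exact_mod_cast h), h3]
  · rw [degree_sub_eq_left_of_degree_lt (by rw [h3, h4]; exact_mod_cast h), h4]
  · rw [degree_sub_eq_right_of_degree_lt (by rw [h3, h4]; exact_mod_cast h), h3]

open Polynomial in
/-- A letter moves `δ` into its own region from `δ = 0` and from any region other than that
of its inverse. -/
lemma degreeRegion_step {K : Type*} [Field K] (x : Fin 2 × Bool) (u v : K[X]) (a b : ℕ)
    (hu : u.degree = a) (hv : v.degree = b)
    (h : a = b ∨ ∃ y : Fin 2 × Bool, (x.1 = y.1 → x.2 = y.2) ∧ degreeRegion y (u, v)) :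
    degreeRegion x (step (X : K[X]) (X ^ 2) x (u, v)) := by
  obtain ⟨h1, h2, h3, h4, -, -, h7⟩ := degree_combine u v a b hu hv
  obtain ⟨-, -, h3', h4', h5', h6', h7'⟩ := degree_combine v u b a hv hu
  have hc : a = b ∨ ∃ y : Fin 2 × Bool, (x.1 = y.1 → x.2 = y.2) ∧
      (match y with
        | (0, true) => b + 2 ≤ a
        | (0, false) => b = a + 1
        | (1, true) => a = b + 1
        | (1, false) => a + 2 ≤ b) := by
    refine h.imp_right ?_
    rintro ⟨y, hy, a', b', ha, hb, hm⟩
    have e1 : a' = a := by rw [hu] at ha; exact_mod_cast ha.symm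
    have e2 : b' = b := by rw [hv] at hb; exact_mod_cast hb.symm
    subst e1 e2
    exact ⟨y, hy, hm⟩
  clear h
  obtain ⟨i, s⟩ := x
  -- The only facts used below are which regions `(a, b)` may lie in.
  have hcases : a = b ∨ (¬(i = 0 ∧ s = false) ∧ b + 2 ≤ a) ∨ (¬(i = 0 ∧ s = true) ∧ b = a + 1) ∨
      (¬(i = 1 ∧ s = false) ∧ a = b + 1) ∨ (¬(i = 1 ∧ s = true) ∧ a + 2 ≤ b) := by
    rcases hc with hc | ⟨⟨i', s'⟩, hy, hm⟩
    · exact Or.inl hc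
    · fin_cases i' <;> cases s' <;> fin_cases i <;> cases s <;> simp at hy hm ⊢ <;> omega
  clear hc
  fin_cases i <;> cases s <;> simp at hcases
  · exact ⟨b + 3, b + 4, h3 (by omega), h7', by simp⟩
  · rcases lt_or_ge (b + 3) (a + 4) with hab | hab
    · exact ⟨a + 4, b, h1 hab, hv, by simp; omega⟩
    · exact ⟨b + 3, b, h2 (by omega), hv, by simp⟩
  · rcases lt_or_ge (a + 3) (b + 4) with hab | hab
    · exact ⟨a, b + 4, hu, h5' hab, by simp; omega⟩
    · exact ⟨a, a + 3, hu, h6' (by omega), by simp⟩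
  · exact ⟨a + 4, a + 3, h7, h4' (by omega), by simp⟩

open Polynomial in
/-- With `α = X` and `β = X ^ 2`, no nonempty reduced word acts on the vector `(1, 1)` as a
scalar power of `β`: the image of `(1, 1)` has `δ ≠ 0`. -/
lemma run_poly {K : Type*} [Field K] (L : List (Fin 2 × Bool)) (hr : FreeGroup.IsReduced L)
    (hL : L ≠ []) (k : ℕ) :
    run (X : K[X]) (X ^ 2) L (1, 1) ≠ ((X ^ 2) ^ k * 1, (X ^ 2) ^ k * 1) := by
  intro h
  have key := ping_pong (α := (X : K[X])) (β := X ^ 2) degreeRegion (fun _ => (1, 1))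
    (fun x => degreeRegion_step x 1 1 0 0 degree_one degree_one (Or.inl rfl))
    (by
      rintro x y hne ⟨u, v⟩ hv
      obtain ⟨a, b, ha, hb, -⟩ := id hv
      exact degreeRegion_step x u v a b ha hb (Or.inr ⟨y, hne, hv⟩)) L hr hL
  simp only [h] at key
  obtain ⟨a, b, ha, hb, hm⟩ := key
  have hab : a = b := by rw [hb] at ha; exact_mod_cast ha.symm
  revert hm
  generalize L.head hL = x
  obtain ⟨i, s⟩ := x
  fin_cases i <;> cases s <;> simp <;> omega

/-! ### Specialization of the parameters -/

/-- If `α` is `2` or transcendental and `char K = 0`, the specialization `α ↦ 2`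
reduces to Sanov's theorem. -/
lemma run_ne_of_char_zero {K : Type*} [Field K] [CharZero K] (α : K)
    (hα : α = 2 ∨ TranscendentalOverPrime K α) (L : List (Fin 2 × Bool))
    (hr : FreeGroup.IsReduced L) (hL : L ≠ []) :
    ∃ p : K × K, run α 1 L p ≠ p := by
  obtain ⟨p, hp⟩ := run_two L hr hL
  refine ⟨((p.1 : K), (p.2 : K)), fun h => hp ?_⟩
  rcases hα with rfl | hα
  · have := run_map (Int.castRingHom K) 2 1 L p
    simp only [map_ofNat, map_one, eq_intCast, h, Prod.mk.injEq, Int.cast_inj] at this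
    exact Prod.ext this.1.symm this.2.symm
  · let q := run (Polynomial.X : Polynomial ℤ) 1 L (Polynomial.C p.1, Polynomial.C p.2)
    have h1 := run_map (Polynomial.aeval α : Polynomial ℤ →ₐ[ℤ] K).toRingHom Polynomial.X 1 L
      (Polynomial.C p.1, Polynomial.C p.2)
    have h2 := run_map (Polynomial.evalRingHom (2 : ℤ)) Polynomial.X 1 L
      (Polynomial.C p.1, Polynomial.C p.2)
    have inj : Function.Injective (Int.castRingHom K) := (Int.castRingHom K).injective_int
    have z : ∀ (f : Polynomial ℤ) (c : ℤ), Polynomial.aeval α f = (c : K) →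
        Polynomial.eval 2 f = c := by
      intro f c hf
      have h0 := hα (f - Polynomial.C c) (by simp [hf])
      rw [Polynomial.map_eq_zero_iff inj, sub_eq_zero] at h0
      rw [h0, Polynomial.eval_C]
    simp [h, Prod.ext_iff] at h1
    simp at h2
    rw [h2]
    exact Prod.ext (z _ _ h1.1.symm) (z _ _ h1.2.symm)

lemma ne_zero_of_algIndep {K : Type*} [Field K] {α β : K} (h : AlgIndepOverPrime K α β) :
    β ≠ 0 := by
  rintro rfl
  have := h (MvPolynomial.X 1) (by simp)
  simp at this

/-- If `α` and `β` are algebraically independent over the prime field, they may be specialized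
to `X` and `X ^ 2` in `K[X]`. -/
lemma run_ne_of_algIndep {K : Type*} [Field K] {α β : K} (h : AlgIndepOverPrime K α β)
    (L : List (Fin 2 × Bool)) (hr : FreeGroup.IsReduced L) (hL : L ≠ []) (k : ℕ) :
    run α β L (1, 1) ≠ (β ^ k * 1, β ^ k * 1) := by
  intro he
  have h1 := run_map (MvPolynomial.aeval ![α, β] : MvPolynomial (Fin 2) ℤ →ₐ[ℤ] K).toRingHom
    (MvPolynomial.X 0) (MvPolynomial.X 1) L (1, 1)
  let e : MvPolynomial (Fin 2) ℤ →+* Polynomial K :=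
    (MvPolynomial.aeval ![(Polynomial.X : Polynomial K), Polynomial.X ^ 2] :
      MvPolynomial (Fin 2) K →ₐ[K] Polynomial K).toRingHom.comp
        (MvPolynomial.map (Int.castRingHom K))
  have h2 := run_map e (MvPolynomial.X 0) (MvPolynomial.X 1) L (1, 1)
  have e0 : e (MvPolynomial.X 0) = Polynomial.X := by simp [e]
  have e1 : e (MvPolynomial.X 1) = Polynomial.X ^ 2 := by simp [e]
  have z : ∀ f : MvPolynomial (Fin 2) ℤ, MvPolynomial.aeval ![α, β] f = β ^ k →
      e f = (Polynomial.X ^ 2) ^ k := by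
    intro f hf
    have h0 := h (f - MvPolynomial.X 1 ^ k) (by simp [hf])
    rw [map_sub, sub_eq_zero] at h0
    rw [← e1, ← map_pow]
    simp only [e, RingHom.comp_apply, h0]
  simp [he, Prod.ext_iff] at h1
  apply run_poly (K := K) L hr hL k
  rw [e0, e1, map_one] at h2
  rw [h2, z _ h1.1.symm, z _ h1.2.symm, mul_one]

/-! ### Elements of the form `c` and `d` in an algebra -/

section elt

variable {K : Type*} [Field K] {A : Type*} [Ring A] [Algebra K A]

/-- The element `1 + α P + (β - 1) x + (β⁻¹ - 1) y`. When `x`, `y` are orthogonal idempotents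
and `P = x P y`, it acts as `!![β, α; 0, β⁻¹]` on the corner of `x + y` and as the identity on
the complement. -/
def elt (x y P : A) (α β : K) : A :=
  1 + algebraMap K A α * P + algebraMap K A (β - 1) * x + algebraMap K A (β⁻¹ - 1) * y

/-- `x` and `y` are orthogonal idempotents and `P` lies in `x A y`. -/
structure Corner (x y P : A) : Prop where
  xx : x * x = x
  yy : y * y = y
  xy : x * y = 0
  yx : y * x = 0
  xP : x * P = P
  Py : P * y = P

lemma elt_mul_elt {x y P : A} (h : Corner x y P) (α : K) {β : K} (hβ : β ≠ 0) :
    elt x y P α β * elt x y P (-α) β⁻¹ = 1 := by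
  have yP : y * P = 0 := by rw [← h.xP, ← mul_assoc, h.yx, zero_mul]
  have Px : P * x = 0 := by rw [← h.Py, mul_assoc, h.yx, mul_zero]
  have PP : P * P = 0 := by
    calc P * P = P * (x * P) := by rw [h.xP]
      _ = 0 := by rw [← mul_assoc, Px, zero_mul]
  simp only [elt, ← Algebra.smul_def, mul_add, add_mul, one_mul, mul_one, smul_mul_smul_comm,
    h.xx, h.yy, h.xy, h.yx, h.xP, h.Py, yP, Px, PP, smul_zero, inv_inv]
  match_scalars <;> field_simp <;> ring

/-- The element `elt x y P α β` as a unit. -/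
def eltUnit {x y P : A} (h : Corner x y P) (α : K) {β : K} (hβ : β ≠ 0) : Aˣ where
  val := elt x y P α β
  inv := elt x y P (-α) β⁻¹
  val_inv := elt_mul_elt h α hβ
  inv_val := by simpa using elt_mul_elt h (-α) (inv_ne_zero hβ)

end elt

lemma elt_mulVec {K : Type*} [Field K] {n : ℕ} {i j : Fin n} (hij : i ≠ j) (α β u v : K) :
    (elt (Matrix.single i i 1) (Matrix.single j j 1) (Matrix.single i j 1) α β :
      Matrix (Fin n) (Fin n) K).mulVec (Pi.single i u + Pi.single j v) =
      Pi.single i (β * u + α * v) + Pi.single j (β⁻¹ * v) := by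
  simp only [elt, ← Algebra.smul_def, Matrix.add_mulVec, Matrix.smul_mulVec, Matrix.one_mulVec,
    Matrix.single_mulVec]
  ext k
  by_cases h1 : k = i
  · subst h1
    simp [hij]
    ring
  · by_cases h2 : k = j
    · subst h2
      simp [hij.symm]
      ring
    · simp [h1, h2]

/-- A criterion for freeness: the units `c`, `d` of an algebra represented by matrices are free
as soon as no nonempty reduced word acts on `K²` as the scalar `β ^ (length)`. -/
lemma freePair_of_run {K : Type*} [Field K] {A : Type*} [Ring A] [Algebra K A] {n : ℕ}
    (Φ : A →ₐ[K] Matrix (Fin n) (Fin n) K) {i j : Fin n} (hij : i ≠ j) {x y P Q : A}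
    (hP : Corner x y P) (hQ : Corner y x Q) (hx : Φ x = Matrix.single i i 1)
    (hy : Φ y = Matrix.single j j 1) (hΦP : Φ P = Matrix.single i j 1)
    (hΦQ : Φ Q = Matrix.single j i 1) (α : K) {β : K} (hβ : β ≠ 0)
    (hrun : ∀ L : List (Fin 2 × Bool), FreeGroup.IsReduced L → L ≠ [] →
      ∃ p : K × K, run α β L p ≠ (β ^ L.length * p.1, β ^ L.length * p.2)) :
    FreePair (eltUnit hP α hβ) (eltUnit hQ α (inv_ne_zero hβ)) := by
  let T : K × K → Fin n → K := fun p => Pi.single i p.1 + Pi.single j p.2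
  have T_inj : Function.Injective T := by
    intro p q h
    have h1 := congrFun h i
    have h2 := congrFun h j
    simp [T, hij, hij.symm] at h1 h2
    exact Prod.ext h1 h2
  have T_smul : ∀ (k : K) p, k • T p = T (k * p.1, k * p.2) := by
    intro k p
    simp [T, ← Pi.single_smul]
  have T_comm : ∀ p : K × K, T p = Pi.single j p.2 + Pi.single i p.1 := fun p => add_comm _ _
  have hΦ1 : ∀ a b : K, Φ (elt x y P a b) = elt (Matrix.single i i 1) (Matrix.single j j 1)
      (Matrix.single i j 1) a b := by
    intro a b; simp [elt, hx, hy, hΦP]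
  have hΦ2 : ∀ a b : K, Φ (elt y x Q a b) = elt (Matrix.single j j 1) (Matrix.single i i 1)
      (Matrix.single j i 1) a b := by
    intro a b; simp [elt, hx, hy, hΦQ]
  let f : Fin 2 → Aˣ := ![eltUnit hP α hβ, eltUnit hQ α (inv_ne_zero hβ)]
  let g : Fin 2 × Bool → Aˣ := fun z => cond z.2 (f z.1) (f z.1)⁻¹
  have letter : ∀ z p, β • (Φ (g z : A)).mulVec (T p) = T (step α β z p) := by
    rintro ⟨k, b⟩ p
    fin_cases k <;> cases b
    · change β • (Φ (elt x y P (-α) β⁻¹)).mulVec _ = _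
      rw [hΦ1, elt_mulVec hij, T_smul (p := (_, _))]
      congr 1
      simp [step]; constructor <;> field_simp; ring
    · change β • (Φ (elt x y P α β)).mulVec _ = _
      rw [hΦ1, elt_mulVec hij, T_smul (p := (_, _))]
      congr 1
      simp [step]; constructor <;> field_simp
    · change β • (Φ (elt y x Q (-α) β⁻¹⁻¹)).mulVec _ = _
      rw [hΦ2, T_comm, elt_mulVec hij.symm, add_comm, T_smul (p := (_, _))]
      congr 1
      simp [step]; constructor <;> field_simp; ring
    · change β • (Φ (elt y x Q α β⁻¹)).mulVec _ = _
      rw [hΦ2, T_comm, elt_mulVec hij.symm, add_comm, T_smul (p := (_, _))]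
      congr 1
      simp [step]; constructor <;> field_simp; ring
  have word : ∀ (L : List (Fin 2 × Bool)) p,
      β ^ L.length • (Φ ((L.map g).prod : Aˣ)).mulVec (T p) = T (run α β L p) := by
    intro L p
    induction L with
    | nil => simp [run]
    | cons z L ih =>
      rw [run_cons, ← letter, ← ih, List.map_cons, List.prod_cons, Units.val_mul, map_mul,
        ← Matrix.mulVec_mulVec, Matrix.mulVec_smul, smul_smul, List.length_cons, pow_succ']
  refine (injective_iff_map_eq_one _).2 fun w hw => ?_
  by_contra hne
  obtain ⟨p, hp⟩ := hrun w.toWord FreeGroup.isReduced_toWord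
    (mt FreeGroup.toWord_eq_nil_iff.1 hne)
  have hprod : (w.toWord.map g).prod = 1 := by
    rw [← FreeGroup.mk_toWord (x := w), FreeGroup.lift_mk] at hw
    exact hw
  have := word w.toWord p
  rw [hprod, Units.val_one, map_one, Matrix.one_mulVec, T_smul] at this
  exact hp (T_inj this).symm

/-! ### The Leavitt path algebra of the line graph -/

section line

open LPA

variable (K : Type*) [Field K] (n : ℕ)

/-- The matrix unit attached to a generator of `L_K(A_n)`. -/
def genMatrix : Gen (Fin n) (Fin (n - 1)) → Matrix (Fin n) (Fin n) K
  | .vertex v => Matrix.single v v 1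
  | .edge e => Matrix.single (lineS n e) (lineR n e) 1
  | .ghost e => Matrix.single (lineR n e) (lineS n e) 1

lemma lineS_injective : Function.Injective (lineS n) := by
  intro e f h
  simp [lineS] at h
  exact Fin.ext h

lemma genMatrix_rel ⦃a b : FreeAlgebra K (Gen (Fin n) (Fin (n - 1)))⦄
    (h : LeavittRel K (lineS n) (lineR n) a b) :
    FreeAlgebra.lift K (genMatrix K n) a = FreeAlgebra.lift K (genMatrix K n) b := by
  have cohn : ∀ a b, CohnRel K (lineS n) (lineR n) a b →
      FreeAlgebra.lift K (genMatrix K n) a = FreeAlgebra.lift K (genMatrix K n) b := by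
    intro a b h
    cases h with
    | vtx_mul v w =>
      split_ifs with hvw
      · subst hvw; simp [genMatrix]
      · simp [genMatrix, Matrix.single_mul_single_of_ne _ _ _ _ hvw]
    | edge_src e => simp [genMatrix]
    | edge_rng e => simp [genMatrix]
    | ghost_rng e => simp [genMatrix]
    | ghost_src e => simp [genMatrix]
    | ck1 e f =>
      split_ifs with hef
      · subst hef; simp [genMatrix]
      · simp [genMatrix,
          Matrix.single_mul_single_of_ne _ _ _ _ ((lineS_injective n).ne hef)]
    | @unit inst =>
      -- The relation quantifies over all `Fintype` structures on the vertex set.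
      obtain rfl : inst = Fin.fintype n := Subsingleton.elim _ _
      simp [genMatrix, Matrix.sum_single_one]
  cases h with
  | cohn h => exact cohn _ _ h
  | ck2 v hfin hne =>
    obtain ⟨e, rfl⟩ := hne
    have : hfin.toFinset = {e} := by
      ext f
      simp [(lineS_injective n).eq_iff]
    rw [this]
    simp [genMatrix]

/-- The representation of `L_K(A_n)` by `n × n` matrices sending the generators to
matrix units. -/
def rep : LeavittPathAlgebra K (lineS n) (lineR n) →ₐ[K] Matrix (Fin n) (Fin n) K :=
  RingQuot.liftAlgHom K ⟨FreeAlgebra.lift K (genMatrix K n), genMatrix_rel K n⟩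

lemma rep_vtx (v : Fin n) : rep K n (vtx K _ _ v) = Matrix.single v v 1 := by
  simp [rep, vtx, genMatrix]

lemma rep_edg (e : Fin (n - 1)) :
    rep K n (edg K _ _ e) = Matrix.single (lineS n e) (lineR n e) 1 := by
  simp [rep, edg, genMatrix]

lemma rep_gh (e : Fin (n - 1)) :
    rep K n (gh K _ _ e) = Matrix.single (lineR n e) (lineS n e) 1 := by
  simp [rep, gh, genMatrix]

lemma vtx_mul_vtx {V E : Type*} (s r : E → V) (v w : V) :
    vtx K s r v * vtx K s r w = if v = w then vtx K s r v else 0 := by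
  unfold vtx
  rw [← map_mul, RingQuot.mkAlgHom_rel K (LeavittRel.cohn (CohnRel.vtx_mul v w))]
  split_ifs <;> simp

lemma lineVtx_mul_self (k : ℕ) : lineVtx K n k * lineVtx K n k = lineVtx K n k := by
  unfold lineVtx
  split_ifs <;> simp [vtx_mul_vtx]

lemma lineVtx_mul_of_ne {k l : ℕ} (h : k ≠ l) : lineVtx K n k * lineVtx K n l = 0 := by
  unfold lineVtx
  split_ifs <;> simp [vtx_mul_vtx, h]

lemma lineVtx_mul_lineEdg (k : ℕ) : lineVtx K n k * lineEdg K n k = lineEdg K n k := by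
  unfold lineVtx lineEdg
  split_ifs with h1 h2
  · unfold vtx edg
    rw [← map_mul]
    exact RingQuot.mkAlgHom_rel K (LeavittRel.cohn (CohnRel.edge_src (s := lineS n) ⟨k, h2⟩))
  · simp
  · omega
  · simp

lemma lineEdg_mul_lineVtx (k : ℕ) : lineEdg K n k * lineVtx K n (k + 1) = lineEdg K n k := by
  unfold lineVtx lineEdg
  split_ifs with h1 h2 h2
  · unfold vtx edg
    rw [← map_mul]
    exact RingQuot.mkAlgHom_rel K (LeavittRel.cohn (CohnRel.edge_rng (r := lineR n) ⟨k, h1⟩))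
  · omega
  · simp
  · simp

lemma lineVtx_mul_lineGh (k : ℕ) : lineVtx K n (k + 1) * lineGh K n k = lineGh K n k := by
  unfold lineVtx lineGh
  split_ifs with h1 h2 h2
  · unfold vtx gh
    rw [← map_mul]
    exact RingQuot.mkAlgHom_rel K (LeavittRel.cohn (CohnRel.ghost_rng (r := lineR n) ⟨k, h2⟩))
  · simp
  · omega
  · simp

lemma lineGh_mul_lineVtx (k : ℕ) : lineGh K n k * lineVtx K n k = lineGh K n k := by
  unfold lineVtx lineGh
  split_ifs with h1 h2 h2
  · unfold vtx gh
    rw [← map_mul]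
    exact RingQuot.mkAlgHom_rel K (LeavittRel.cohn (CohnRel.ghost_src (s := lineS n) ⟨k, h1⟩))
  · omega
  · simp
  · simp

variable {n} {i j : ℕ}

lemma corner_linePath (h1i : 1 ≤ i) (hij : i < j) :
    Corner (lineVtx K n (i - 1)) (lineVtx K n (j - 1)) (linePath K n i j) where
  xx := lineVtx_mul_self K n _
  yy := lineVtx_mul_self K n _
  xy := lineVtx_mul_of_ne K n (by omega)
  yx := lineVtx_mul_of_ne K n (by omega)
  xP := by
    obtain ⟨m, rfl⟩ : ∃ m, j = i + (m + 1) := ⟨j - i - 1, by omega⟩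
    rw [linePath, show i + (m + 1) - i = m + 1 by omega, List.range_succ_eq_map, List.map_cons,
      List.prod_cons, add_zero, ← mul_assoc, lineVtx_mul_lineEdg]
  Py := by
    obtain ⟨m, rfl⟩ : ∃ m, j = i + (m + 1) := ⟨j - i - 1, by omega⟩
    rw [linePath, show i + (m + 1) - i = m + 1 by omega, List.range_succ, List.map_append,
      List.prod_append, List.map_singleton, List.prod_singleton, mul_assoc,
      show i + (m + 1) - 1 = i - 1 + m + 1 by omega, lineEdg_mul_lineVtx]

lemma corner_lineGhostPath (h1i : 1 ≤ i) (hij : i < j) :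
    Corner (lineVtx K n (j - 1)) (lineVtx K n (i - 1)) (lineGhostPath K n i j) where
  xx := lineVtx_mul_self K n _
  yy := lineVtx_mul_self K n _
  xy := lineVtx_mul_of_ne K n (by omega)
  yx := lineVtx_mul_of_ne K n (by omega)
  xP := by
    obtain ⟨m, rfl⟩ : ∃ m, j = i + (m + 1) := ⟨j - i - 1, by omega⟩
    rw [lineGhostPath, show i + (m + 1) - i = m + 1 by omega, List.range_succ_eq_map,
      List.map_cons, List.prod_cons, Nat.sub_zero, ← mul_assoc,
      show i + (m + 1) - 1 = i + (m + 1) - 2 + 1 by omega, lineVtx_mul_lineGh]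
  Py := by
    obtain ⟨m, rfl⟩ : ∃ m, j = i + (m + 1) := ⟨j - i - 1, by omega⟩
    rw [lineGhostPath, show i + (m + 1) - i = m + 1 by omega, List.range_succ, List.map_append,
      List.prod_append, List.map_singleton, List.prod_singleton, mul_assoc,
      show i + (m + 1) - 2 - m = i - 1 by omega, lineGh_mul_lineVtx]

lemma rep_edges (a m : ℕ) (h : a + m < n) (hm : 0 < m) :
    rep K n (((List.range m).map (fun k => lineEdg K n (a + k))).prod) =
      Matrix.single ⟨a, by omega⟩ ⟨a + m, h⟩ 1 := by
  induction m, hm using Nat.le_induction with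
  | base => simp [lineEdg, show a < n - 1 by omega, rep_edg, lineS, lineR]
  | succ m hm ih =>
    rw [List.range_succ, List.map_append, List.prod_append, List.map_singleton,
      List.prod_singleton, map_mul, ih (by omega), lineEdg, dif_pos (by omega), rep_edg]
    simp [lineS, lineR, add_assoc]

lemma rep_ghosts (b m : ℕ) (h : b + 1 < n) (hm : 0 < m) (hmb : m ≤ b + 1) :
    rep K n (((List.range m).map (fun k => lineGh K n (b - k))).prod) =
      Matrix.single ⟨b + 1, h⟩ ⟨b + 1 - m, by omega⟩ 1 := by
  induction m, hm using Nat.le_induction with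
  | base => simp [lineGh, show b < n - 1 by omega, rep_gh, lineS, lineR]
  | succ m hm ih =>
    rw [List.range_succ, List.map_append, List.prod_append, List.map_singleton,
      List.prod_singleton, map_mul, ih (by omega), lineGh, dif_pos (by omega), rep_gh]
    have e : lineR n ⟨b - m, by omega⟩ = ⟨b + 1 - m, by omega⟩ := by
      simp [lineR]; omega
    rw [e]
    simp [lineS]

lemma freePair_line (h1i : 1 ≤ i) (hij : i < j) (hjn : j ≤ n) (α : K) {β : K} (hβ : β ≠ 0)
    (hrun : ∀ L : List (Fin 2 × Bool), FreeGroup.IsReduced L → L ≠ [] →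
      ∃ p : K × K, run α β L p ≠ (β ^ L.length * p.1, β ^ L.length * p.2)) :
    FreePair (eltUnit (corner_linePath K (n := n) h1i hij) α hβ)
      (eltUnit (corner_lineGhostPath K (n := n) h1i hij) α (inv_ne_zero hβ)) := by
  refine freePair_of_run (rep K n) (i := ⟨i - 1, by omega⟩) (j := ⟨j - 1, by omega⟩)
    (by simp; omega) _ _ ?_ ?_ ?_ ?_ α hβ hrun
  · rw [lineVtx, dif_pos (by omega), rep_vtx]
  · rw [lineVtx, dif_pos (by omega), rep_vtx]
  · rw [linePath, rep_edges K _ _ (by omega) (by omega)]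
    congr 2
    omega
  · rw [lineGhostPath, rep_ghosts K _ _ (by omega) (by omega) (by omega)]
    congr 2 <;> omega

end line

end LineFree

/-- free subgroups of units of the Leavitt path algebra of the oriented line
graph `A_n` (here vertices `v_1, …, v_n` and edges `e_1, …, e_{n-1}` are `1`-indexed in the
hypotheses and translated to `0`-indexed data). -/
theorem stmt8 (n : ℕ) (hn : 2 ≤ n) (K : Type*) [Field K] (hK : ¬ IsAbsoluteField K)
    (i j : ℕ) (h1i : 1 ≤ i) (hij : i < j) (hjn : j ≤ n) (α β : K) :
    (CharP K 0 → (α = 2 ∨ TranscendentalOverPrime K α) →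
      ∃ ua ub : (LPA.LeavittPathAlgebra K (LPA.lineS n) (LPA.lineR n))ˣ,
        (ua : LPA.LeavittPathAlgebra K (LPA.lineS n) (LPA.lineR n)) =
            1 + algebraMap K _ α * LPA.linePath K n i j ∧
        (ub : LPA.LeavittPathAlgebra K (LPA.lineS n) (LPA.lineR n)) =
            1 + algebraMap K _ α * LPA.lineGhostPath K n i j ∧
        FreePair ua ub) ∧
    (∀ t : ℕ, 0 < t → CharP K t → AlgIndepOverPrime K α β →
      ∃ uc ud : (LPA.LeavittPathAlgebra K (LPA.lineS n) (LPA.lineR n))ˣ,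
        (uc : LPA.LeavittPathAlgebra K (LPA.lineS n) (LPA.lineR n)) =
            1 + algebraMap K _ α * LPA.linePath K n i j
              + algebraMap K _ (β - 1) * LPA.lineVtx K n (i - 1)
              + algebraMap K _ (β⁻¹ - 1) * LPA.lineVtx K n (j - 1) ∧
        (ud : LPA.LeavittPathAlgebra K (LPA.lineS n) (LPA.lineR n)) =
            1 + algebraMap K _ α * LPA.lineGhostPath K n i j
              + algebraMap K _ (β - 1) * LPA.lineVtx K n (i - 1)
              + algebraMap K _ (β⁻¹ - 1) * LPA.lineVtx K n (j - 1) ∧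
        FreePair uc ud) := by
  constructor
  · intro hchar hα
    have : CharZero K := CharP.charP_to_charZero K
    -- For `β = 1` the elements `c` and `d` are `a` and `b`.
    refine ⟨_, _, ?_, ?_, LineFree.freePair_line K h1i hij hjn α one_ne_zero ?_⟩
    · simp [LineFree.eltUnit, LineFree.elt]
    · simp [LineFree.eltUnit, LineFree.elt]
    · intro L hr hL
      obtain ⟨p, hp⟩ := LineFree.run_ne_of_char_zero α hα L hr hL
      exact ⟨p, by simpa using hp⟩
  · intro t _ _ hind
    refine ⟨_, _, ?_, ?_, LineFree.freePair_line K h1i hij hjn α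
      (LineFree.ne_zero_of_algIndep hind) ?_⟩
    · rfl
    · simp only [LineFree.eltUnit, LineFree.elt, inv_inv]
      rw [add_right_comm]
    · exact fun L hr hL => ⟨(1, 1), LineFree.run_ne_of_algIndep hind L hr hL _⟩
end
end

section
/- Let E be a directed graph with E^0 finite and K a non-absolute field. Assume there exist a sink w in E and an edge f ∈ E^1 with r(f) = w. Then: (i) if char K = 0 and α ∈ K is equal to 2 or transcendental over the prime subfield ℚ, the elements a := 1 + α f^* and b := 1 + α f generate a non-cyclic free subgroup of L_K(E)^×; (ii) if char K = t > 0 and α, β ∈ K are algebraically independent over the prime subfield 𝔽_t, the elements c := a + (β−1) s(f) + (β^{-1}−1) r(f) and d := b + (β−1) s(f) + (β^{-1}−1) r(f) generate a non-cyclic free subgroup of L_K(E)^×. -/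
/-!
Since `w` is a sink, the Leavitt path algebra acts on the functions on the set of paths ending in
`w`: edges prepend themselves, ghost edges delete a first edge, and (CK2) holds because a path from
a regular vertex to `w` is nontrivial (`LPA.genOp_rel`, `LPA.pathRep`). The plane spanned by the
paths `f` and `w` is invariant under `s(f)`, `r(f)`, `f` and `f^*`, which act there as the matrix
units `e₁₁`, `e₂₂`, `e₁₂`, `e₂₁`. Hence the units `c`, `d` act on the plane as
`[[β, 0], [α, β⁻¹]]` and `[[β, α], [0, β⁻¹]]`, and `a`, `b` are the case `β = 1`
(`LPA.exists_units`).

The `n`-th powers of these matrices have diagonal `βⁿ, β⁻ⁿ` and off-diagonal entry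
`α (βⁿ - β⁻ⁿ) / (β - β⁻¹)`, to be read as `n α` if `β = 1`. Freeness follows from ping-pong on the
two sets of vectors in which one of the coordinates is strictly larger
(`freePair_of_triangular`). The comparison refers to the absolute value of integers if `α = 2`
(`freePair_of_two`), and to the degree in `α` if `α` is transcendental over a field `k` containing
`β` (`freePair_of_transcendental`), applied with `k = ℚ`, `β = 1`, or with `k = 𝔽_t(β)`; in the
latter case `βⁿ ≠ β⁻ⁿ` for `n ≠ 0`, as `β` is not a root of unity.
-/

noncomputable section
open scoped Classical
universe u

/-! ### Ping-pong for triangular pairs -/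

theorem freePair_of_pingPong {G X : Type*} [Group G] [MulAction G X] (g h : G) (A B : Set X)
    (hA : A.Nonempty) (hB : B.Nonempty) (hAB : Disjoint A B)
    (hg : ∀ n : ℤ, n ≠ 0 → ∀ x ∈ B, g ^ n • x ∈ A)
    (hh : ∀ n : ℤ, n ≠ 0 → ∀ x ∈ A, h ^ n • x ∈ B) : FreePair g h := by
  -- nontrivial elements of the `i`-th infinite cyclic factor act as nonzero powers of `g` or `h`
  have key : ∀ i : Fin 2, ∀ z : FreeGroup Unit, z ≠ 1 → ∃ n : ℤ, n ≠ 0 ∧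
      FreeGroup.lift (fun _ => (![g, h] : Fin 2 → G) i) z = (![g, h] : Fin 2 → G) i ^ n := by
    intro i z hz
    obtain ⟨n, rfl⟩ := FreeGroup.freeGroupUnitEquivInt.symm.surjective z
    have hz' : FreeGroup.freeGroupUnitEquivInt.symm n = FreeGroup.of () ^ n := rfl
    refine ⟨n, ?_, by simp [hz']⟩
    rintro rfl
    exact hz (by simp [hz'])
  have e : FreeGroup.lift ![g, h] =
      (Monoid.CoprodI.lift fun i : Fin 2 => FreeGroup.lift fun _ : Unit => (![g, h] : Fin 2 → G) i).comp
        (@freeGroupEquivCoprodI (Fin 2)).toMonoidHom := by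
    ext i
    simp
  unfold FreePair
  rw [e, MonoidHom.coe_comp]
  refine Function.Injective.comp ?_ (MulEquiv.injective freeGroupEquivCoprodI)
  refine Monoid.CoprodI.lift_injective_of_ping_pong _ ?_ ![A, B] ?_ ?_ ?_
  · refine Or.inr ⟨0, ?_⟩
    have : Infinite (FreeGroup Unit) :=
      Infinite.of_injective _ FreeGroup.freeGroupUnitEquivInt.symm.injective
    exact le_trans (Cardinal.natCast_le_aleph0 (n := 3)) (Cardinal.aleph0_le_mk _)
  · intro i; fin_cases i <;> assumption
  · intro i j hij
    fin_cases i <;> fin_cases j <;> simp_all [Function.onFun, disjoint_comm]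
  · intro i j hij z hz
    obtain ⟨n, hn, e⟩ := key i z hz
    rw [e]
    rintro _ ⟨x, hx, rfl⟩
    fin_cases i <;> fin_cases j <;> first | exact absurd rfl hij | skip
    · exact hg n hn x hx
    · exact hh n hn x hx

/-- Ping-pong for a group acting on a set `M` that contains a copy `v` of the plane `K × K` on which
`g` and `h` act by `[[β, 0], [α, β⁻¹]]` and `[[β, α], [0, β⁻¹]]`. The function `q` is the quantum
integer `q n = (βⁿ - β⁻ⁿ) / (β - β⁻¹)`, described by its two recursions so that `β = 1`, `q n = n`
is covered too: the off-diagonal entry of the `n`-th powers is `α * q n`. The ping-pong sets are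
taken inside the plane. -/
theorem freePair_of_triangular {K G M : Type*} [Field K] [Group G] [MulAction G M]
    (v : K → K → M) (hv : ∀ x y x' y', v x y = v x' y' → x = x' ∧ y = y')
    (α β : K) (hβ : β ≠ 0) (q : ℤ → K) (hq0 : q 0 = 0)
    (hq1 : ∀ n, q (n + 1) = β⁻¹ * q n + β ^ n) (hq2 : ∀ n, q (n + 1) = β * q n + (β ^ n)⁻¹)
    (g h : G) (hg : ∀ x y, g • v x y = v (β * x) (β⁻¹ * y + α * x))
    (hh : ∀ x y, h • v x y = v (β * x + α * y) (β⁻¹ * y))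
    (S T : Set (K × K)) (hSne : S.Nonempty) (hTne : T.Nonempty) (hST : Disjoint S T)
    (hTS : ∀ n : ℤ, n ≠ 0 → ∀ x y, (x, y) ∈ T → (β ^ n * x, (β ^ n)⁻¹ * y + α * q n * x) ∈ S)
    (hST' : ∀ n : ℤ, n ≠ 0 → ∀ x y, (x, y) ∈ S → (β ^ n * x + α * q n * y, (β ^ n)⁻¹ * y) ∈ T) :
    FreePair g h := by
  -- the generators act bijectively, so each step of the power formula is an equivalence
  have ind : ∀ P : ℤ → Prop, P 0 → (∀ n, P n ↔ P (n + 1)) → ∀ n, P n := by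
    intro P h0 hs n
    induction n using Int.induction_on with
    | zero => exact h0
    | succ n ih => exact (hs _).1 ih
    | pred n ih => exact (hs _).2 (by simpa using ih)
  have hgn : ∀ x y, ∀ n : ℤ, g ^ n • v x y = v (β ^ n * x) ((β ^ n)⁻¹ * y + α * q n * x) := by
    intro x y
    refine ind _ (by simp [hq0]) fun n => ?_
    rw [← smul_left_cancel_iff g, ← mul_smul, ← zpow_one_add, hg, add_comm 1 n, hq1, zpow_add₀ hβ,
      zpow_one]
    ring_nf
  have hhn : ∀ x y, ∀ n : ℤ, h ^ n • v x y = v (β ^ n * x + α * q n * y) ((β ^ n)⁻¹ * y) := by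
    intro x y
    refine ind _ (by simp [hq0]) fun n => ?_
    rw [← smul_left_cancel_iff h, ← mul_smul, ← zpow_one_add, hh, add_comm 1 n, hq2, zpow_add₀ hβ,
      zpow_one]
    ring_nf
  refine freePair_of_pingPong g h ((fun p : K × K => v p.1 p.2) '' S)
    ((fun p : K × K => v p.1 p.2) '' T) (hSne.image _) (hTne.image _) ?_ ?_ ?_
  · refine (Set.disjoint_image_iff ?_).2 hST
    rintro ⟨x, y⟩ ⟨x', y'⟩ e
    exact Prod.ext (hv _ _ _ _ e).1 (hv _ _ _ _ e).2
  · rintro n hn _ ⟨⟨x, y⟩, hxy, rfl⟩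
    exact ⟨_, hTS n hn x y hxy, (hgn x y n).symm⟩
  · rintro n hn _ ⟨⟨x, y⟩, hxy, rfl⟩
    exact ⟨_, hST' n hn x y hxy, (hhn x y n).symm⟩

/-- Sanov's theorem: the ping-pong sets are the integral vectors whose second, respectively first,
coordinate is the larger one in absolute value. -/
theorem freePair_of_two {K G M : Type*} [Field K] [CharZero K] [Group G] [MulAction G M]
    (v : K → K → M) (hv : ∀ x y x' y', v x y = v x' y' → x = x' ∧ y = y')
    (g h : G) (hg : ∀ x y, g • v x y = v x (y + 2 * x))
    (hh : ∀ x y, h • v x y = v (x + 2 * y) y) : FreePair g h := by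
  have key : ∀ n x y : ℤ, n ≠ 0 → |y| < |x| → |x| < |y + 2 * n * x| := by
    intro n x y hn hxy
    have h1 : |2 * n * x| ≤ |y + 2 * n * x| + |y| := by
      calc |2 * n * x| = |(y + 2 * n * x) - y| := by ring_nf
        _ ≤ _ := abs_sub _ _
    have h2 : 2 * |x| ≤ |2 * n * x| := by
      rw [abs_mul, abs_mul, abs_two]
      nlinarith [Int.one_le_abs hn, abs_nonneg x]
    linarith
  refine freePair_of_triangular v hv 2 1 one_ne_zero (fun n => n) (by simp) (by simp) (by simp) g h
    (by simpa using hg) (by simpa using hh)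
    {p | ∃ x y : ℤ, p = (↑x, ↑y) ∧ |x| < |y|} {p | ∃ x y : ℤ, p = (↑x, ↑y) ∧ |y| < |x|}
    ⟨(0, 1), 0, 1, by simp⟩ ⟨(1, 0), 1, 0, by simp⟩ ?_ ?_ ?_
  · rw [Set.disjoint_left]
    rintro _ ⟨x, y, rfl, h1⟩ ⟨x', y', e, h2⟩
    simp only [Prod.mk.injEq, Int.cast_inj] at e
    obtain ⟨rfl, rfl⟩ := e
    exact lt_asymm h1 h2
  · rintro n hn _ _ ⟨x, y, e, h1⟩
    simp only [Prod.mk.injEq] at e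
    obtain ⟨rfl, rfl⟩ := e
    exact ⟨x, y + 2 * n * x, by simp, key n x y hn h1⟩
  · rintro n hn _ _ ⟨x, y, e, h1⟩
    simp only [Prod.mk.injEq] at e
    obtain ⟨rfl, rfl⟩ := e
    exact ⟨x + 2 * n * y, y, by simp, key n y x hn h1⟩

open Polynomial in
/-- If `α` is transcendental over a field `k` containing `b` and all `q n`, vectors with coordinates
in `k[α]` are compared by degree in `α`: a nonzero power of a generator adds `α * q n` times the
dominant coordinate to the other one, which raises the degree of the latter above the former. -/
theorem freePair_of_transcendental {k K G M : Type*} [Field k] [Field K] [Algebra k K]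
    [Group G] [MulAction G M]
    (v : K → K → M) (hv : ∀ x y x' y', v x y = v x' y' → x = x' ∧ y = y')
    (α : K) (hα : Transcendental k α) (b : k) (hb : b ≠ 0) (q : ℤ → k) (hq0 : q 0 = 0)
    (hq : ∀ n, n ≠ 0 → q n ≠ 0)
    (hq1 : ∀ n, q (n + 1) = b⁻¹ * q n + b ^ n) (hq2 : ∀ n, q (n + 1) = b * q n + (b ^ n)⁻¹)
    (g h : G)
    (hg : ∀ x y, g • v x y = v (algebraMap k K b * x) ((algebraMap k K b)⁻¹ * y + α * x))
    (hh : ∀ x y, h • v x y = v (algebraMap k K b * x + α * y) ((algebraMap k K b)⁻¹ * y)) :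
    FreePair g h := by
  have hinj := transcendental_iff_injective.1 hα
  have key : ∀ (n : ℤ) (c d : k) (x y : k[X]), n ≠ 0 → c ≠ 0 → d ≠ 0 → degree y < degree x →
      degree (C c * x) < degree (C d * y + X * C (q n) * x) := by
    intro n c d x y hn hc hd hxy
    have hx : x ≠ 0 := by rintro rfl; simp at hxy
    have e : degree (X * C (q n) * x) = degree x + 1 := by
      rw [mul_assoc, mul_comm X, degree_mul_X, degree_C_mul (hq n hn)]
    have hlt : degree x < degree x + 1 := by
      rw [degree_eq_natDegree hx]; exact_mod_cast Nat.lt_succ_self _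
    rw [degree_add_eq_right_of_degree_lt, e, degree_C_mul hc]
    · exact hlt
    · rw [e, degree_C_mul hd]; exact hxy.trans hlt
  refine freePair_of_triangular v hv α (algebraMap k K b) (by simpa using hb)
    (fun n => algebraMap k K (q n)) (by simp [hq0]) (fun n => by simp [hq1])
    (fun n => by simp [hq2]) g h hg hh
    {p | ∃ x y : k[X], p = (aeval α x, aeval α y) ∧ degree x < degree y}
    {p | ∃ x y : k[X], p = (aeval α x, aeval α y) ∧ degree y < degree x}
    ⟨(0, 1), 0, 1, by simp⟩ ⟨(1, 0), 1, 0, by simp⟩ ?_ ?_ ?_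
  · rw [Set.disjoint_left]
    rintro _ ⟨x, y, rfl, h1⟩ ⟨x', y', e, h2⟩
    simp only [Prod.mk.injEq, hinj.eq_iff] at e
    obtain ⟨rfl, rfl⟩ := e
    exact lt_asymm h1 h2
  · rintro n hn _ _ ⟨x, y, e, h1⟩
    simp only [Prod.mk.injEq] at e
    obtain ⟨rfl, rfl⟩ := e
    exact ⟨C (b ^ n) * x, C (b ^ n)⁻¹ * y + X * C (q n) * x, by simp [mul_comm α],
      key n _ _ x y hn (zpow_ne_zero _ hb) (inv_ne_zero (zpow_ne_zero _ hb)) h1⟩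
  · rintro n hn _ _ ⟨x, y, e, h1⟩
    simp only [Prod.mk.injEq] at e
    obtain ⟨rfl, rfl⟩ := e
    exact ⟨C (b ^ n) * x + X * C (q n) * y, C (b ^ n)⁻¹ * y, by simp [mul_comm α],
      key n _ _ y x hn (inv_ne_zero (zpow_ne_zero _ hb)) (zpow_ne_zero _ hb) h1⟩

/-! ### The two units -/

/-- With orthogonal idempotents `e`, `p` and `x ∈ p L e`, the element in question is
`(1 - e - p) + β e + β⁻¹ p + α x`, triangular with invertible diagonal; the inverse is obtained by
exchanging `β` with `β⁻¹` and negating `α`. -/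
theorem exists_unit_of_peirce {K L : Type*} [Field K] [Ring L] [Algebra K L] (α β : K) (hβ : β ≠ 0)
    (x e p : L) (hee : e * e = e) (hpp : p * p = p) (hep : e * p = 0) (hpe : p * e = 0)
    (hpx : p * x = x) (hxe : x * e = x) :
    ∃ u : Lˣ, (u : L) = 1 + algebraMap K L α * x + algebraMap K L (β - 1) * e
      + algebraMap K L (β⁻¹ - 1) * p := by
  have hex : e * x = 0 := by rw [← hpx, ← mul_assoc, hep, zero_mul]
  have hxp : x * p = 0 := by rw [← hxe, mul_assoc, hep, mul_zero]
  have hxx : x * x = 0 := by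
    calc x * x = x * e * x := by rw [hxe]
      _ = 0 := by rw [mul_assoc, hex, mul_zero]
  simp only [← Algebra.smul_def]
  have main : ∀ (a c : K), c ≠ 0 → (1 + a • x + (c - 1) • e + (c⁻¹ - 1) • p) *
      (1 + (-a) • x + (c⁻¹ - 1) • e + (c - 1) • p) = 1 := by
    intro a c hc
    simp only [mul_add, add_mul, smul_mul_smul_comm, mul_one, one_mul, hee, hpp, hep, hpe, hpx,
      hxe, hex, hxp, hxx, smul_zero, add_zero]
    match_scalars <;> field_simp <;> ring
  refine ⟨⟨_, _, main α β hβ, ?_⟩, rfl⟩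
  simpa using main (-α) β⁻¹ (inv_ne_zero hβ)

namespace LPA

/-! ### The representation on paths ending in a sink -/

section repr

variable {V E : Type*} (s r : E → V) (w : V)

/-- The source of a path ending in `w`, given by its list of edges; the empty list is the trivial
path at `w`. -/
def listSrc : List E → V
  | [] => w
  | e :: _ => s e

theorem listSrc_cons (e : E) (l : List E) : listSrc s w (e :: l) = s e := rfl

/-- The list of edges is a path ending in `w` (consecutive edges match, and the last one has range
`w`). -/
def IsPathTo : List E → Prop
  | [] => True
  | e :: l => listSrc s w l = r e ∧ IsPathTo l

/-- The finite paths ending in `w`, including the trivial one. -/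
abbrev PathTo := {l : List E // IsPathTo s r w l}

variable (K : Type*) [Field K]

/-- Multiplication by the indicator function of the paths starting at `v`. -/
def vtxOp (v : V) : Module.End K (PathTo s r w → K) where
  toFun φ l := if listSrc s w l.1 = v then φ l else 0
  map_add' φ ψ := by ext l; simp only [Pi.add_apply]; split_ifs <;> simp
  map_smul' c φ := by ext l; simp

/-- The operator sending the indicator of a path `p` with source `r e` to that of `e p`, and all
other indicators to `0`. -/
def edgOp (e : E) : Module.End K (PathTo s r w → K) where
  toFun φ
    | ⟨[], _⟩ => 0
    | ⟨e' :: l, h⟩ => if e' = e then φ ⟨l, h.2⟩ else 0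
  map_add' φ ψ := by
    ext ⟨l, h⟩
    cases l
    · simp
    · simp only [Pi.add_apply]; split_ifs <;> simp
  map_smul' c φ := by
    ext ⟨l, h⟩
    cases l <;> simp

/-- The operator sending the indicator of a path `e p` to that of `p`, and the indicator of a path
not starting with `e` to `0`. -/
def ghOp (e : E) : Module.End K (PathTo s r w → K) where
  toFun φ l := if h : listSrc s w l.1 = r e then φ ⟨e :: l.1, h, l.2⟩ else 0
  map_add' φ ψ := by ext l; simp only [Pi.add_apply]; split_ifs <;> simp
  map_smul' c φ := by ext l; simp

theorem vtxOp_apply (v : V) (φ : PathTo s r w → K) (l) :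
    vtxOp s r w K v φ l = if listSrc s w l.1 = v then φ l else 0 := rfl

theorem ghOp_apply (e : E) (φ : PathTo s r w → K) (l) :
    ghOp s r w K e φ l = if h : listSrc s w l.1 = r e then φ ⟨e :: l.1, h, l.2⟩ else 0 := rfl

theorem edgOp_nil (e : E) (φ : PathTo s r w → K) (h) : edgOp s r w K e φ ⟨[], h⟩ = 0 := rfl

theorem edgOp_cons (e e' : E) (φ : PathTo s r w → K) (l h) :
    edgOp s r w K e φ ⟨e' :: l, h⟩ = if e' = e then φ ⟨l, h.2⟩ else 0 := rfl

/-- The operators attached to the generators of the Leavitt path algebra. -/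
def genOp : Gen V E → Module.End K (PathTo s r w → K)
  | .vertex v => vtxOp s r w K v
  | .edge e => edgOp s r w K e
  | .ghost e => ghOp s r w K e

/-- The operators satisfy the Leavitt relations. Only (CK2) uses that `w` is a sink: a path starting
at a regular vertex is then nontrivial and has a first edge. -/
theorem genOp_rel (hw : IsSink s w) {x y : FreeAlgebra K (Gen V E)} (h : LeavittRel K s r x y) :
    FreeAlgebra.lift K (genOp s r w K) x = FreeAlgebra.lift K (genOp s r w K) y := by
  cases h with
  | cohn h =>
    cases h with
    | vtx_mul v v' =>
      ext φ l
      split_ifs with h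
      · subst h
        simp only [map_mul, FreeAlgebra.lift_ι_apply, genOp, Module.End.mul_apply, vtxOp_apply]
        split_ifs <;> rfl
      · simp only [map_mul, FreeAlgebra.lift_ι_apply, genOp, Module.End.mul_apply, vtxOp_apply,
          map_zero, LinearMap.zero_apply, Pi.zero_apply]
        split_ifs with h1 h2
        · exact absurd (h1.symm.trans h2) h
        all_goals rfl
    | edge_src e =>
      ext φ ⟨l, hl⟩
      simp only [map_mul, FreeAlgebra.lift_ι_apply, genOp, Module.End.mul_apply, vtxOp_apply]
      cases l with
      | nil => simp [edgOp_nil]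
      | cons e' l =>
        by_cases h : e' = e
        · subst h; simp [listSrc]
        · simp [edgOp_cons, h]
    | edge_rng e =>
      ext φ ⟨l, hl⟩
      simp only [map_mul, FreeAlgebra.lift_ι_apply, genOp, Module.End.mul_apply]
      cases l with
      | nil => simp [edgOp_nil]
      | cons e' l =>
        by_cases h : e' = e
        · subst h; simp [edgOp_cons, vtxOp_apply, hl.1]
        · simp [edgOp_cons, h]
    | ghost_rng e =>
      ext φ l
      simp only [map_mul, FreeAlgebra.lift_ι_apply, genOp, Module.End.mul_apply, vtxOp_apply,
        ghOp_apply]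
      split_ifs <;> rfl
    | ghost_src e =>
      ext φ l
      simp only [map_mul, FreeAlgebra.lift_ι_apply, genOp, Module.End.mul_apply, vtxOp_apply,
        ghOp_apply, listSrc_cons, if_true]
    | ck1 e e' =>
      ext φ ⟨l, hl⟩
      split_ifs with h
      · subst h
        simp only [map_mul, FreeAlgebra.lift_ι_apply, genOp, Module.End.mul_apply, vtxOp_apply,
          ghOp_apply]
        split_ifs
        · exact (edgOp_cons ..).trans (if_pos rfl)
        · rfl
      · simp only [map_mul, FreeAlgebra.lift_ι_apply, genOp, Module.End.mul_apply,
          ghOp_apply, map_zero, LinearMap.zero_apply, Pi.zero_apply]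
        split_ifs
        · exact (edgOp_cons ..).trans (if_neg h)
        · rfl
    | unit =>
      ext φ l
      simp [genOp, LinearMap.sum_apply, Finset.sum_apply, vtxOp_apply]
  | ck2 v hfin hne =>
    ext φ ⟨l, hl⟩
    simp only [map_sum, map_mul, FreeAlgebra.lift_ι_apply, genOp, LinearMap.sum_apply,
      Finset.sum_apply, Module.End.mul_apply, vtxOp_apply]
    cases l with
    | nil =>
      -- the sink `w` is not regular, so the empty path does not start at `v`
      obtain ⟨e, he⟩ := hne
      have : w ≠ v := fun h => hw e (he.trans h.symm)
      simp [edgOp_nil, listSrc, this]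
    | cons e' l =>
      have h : ∀ e, edgOp s r w K e (ghOp s r w K e φ) ⟨e' :: l, hl⟩ =
          if e' = e then φ ⟨e' :: l, hl⟩ else 0 := by
        intro e
        rw [edgOp_cons]
        split_ifs with h
        · subst h
          rw [ghOp_apply, dif_pos hl.1]
        · rfl
      simp only [h, listSrc_cons, Finset.sum_ite_eq, Set.Finite.mem_toFinset, Set.mem_ofPred_eq]
      congr

/-- The representation of the Leavitt path algebra on the `K`-valued functions on the set of paths
ending in the sink `w`. -/
def pathRep (hw : IsSink s w) : LeavittPathAlgebra K s r →ₐ[K] Module.End K (PathTo s r w → K) :=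
  RingQuot.liftAlgHom K ⟨FreeAlgebra.lift K (genOp s r w K), fun _ _ h => genOp_rel s r w K hw h⟩

theorem pathRep_vtx (hw : IsSink s w) (v : V) :
    pathRep s r w K hw (vtx K s r v) = vtxOp s r w K v := by
  simp [pathRep, vtx, RingQuot.liftAlgHom_mkAlgHom_apply, genOp]

theorem pathRep_edg (hw : IsSink s w) (e : E) :
    pathRep s r w K hw (edg K s r e) = edgOp s r w K e := by
  simp [pathRep, edg, RingQuot.liftAlgHom_mkAlgHom_apply, genOp]

theorem pathRep_gh (hw : IsSink s w) (e : E) :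
    pathRep s r w K hw (gh K s r e) = ghOp s r w K e := by
  simp [pathRep, gh, RingQuot.liftAlgHom_mkAlgHom_apply, genOp]

/-- The function with value `x` at the path `f`, value `y` at the trivial path, and `0` elsewhere. -/
def planeVec (f : E) (x y : K) : PathTo s r w → K :=
  fun l => if l.1 = [f] then x else if l.1 = [] then y else 0

variable (f : E) (x y : K)

theorem planeVec_inj (hf : r f = w) (x' y' : K)
    (h : planeVec s r w K f x y = planeVec s r w K f x' y') : x = x' ∧ y = y' :=
  ⟨by simpa [planeVec] using congrFun h ⟨[f], hf.symm, trivial⟩,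
    by simpa [planeVec] using congrFun h ⟨[], trivial⟩⟩

theorem planeVec_add (x' y' : K) : planeVec s r w K f x y + planeVec s r w K f x' y' =
    planeVec s r w K f (x + x') (y + y') := by
  ext l; simp only [planeVec, Pi.add_apply]; split_ifs <;> simp

theorem planeVec_smul (c : K) :
    c • planeVec s r w K f x y = planeVec s r w K f (c * x) (c * y) := by
  ext l; simp only [planeVec, Pi.smul_apply]; split_ifs <;> simp

theorem vtxOp_src_planeVec (hw : IsSink s w) :
    vtxOp s r w K (s f) (planeVec s r w K f x y) = planeVec s r w K f x 0 := by
  ext ⟨l, hl⟩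
  have := (hw f).symm
  rcases l with _ | ⟨e, _ | ⟨e', l⟩⟩ <;> simp [vtxOp_apply, planeVec, listSrc, this]
  rintro h rfl
  exact absurd rfl h

theorem vtxOp_rng_planeVec (hw : IsSink s w) :
    vtxOp s r w K w (planeVec s r w K f x y) = planeVec s r w K f 0 y := by
  ext ⟨l, hl⟩
  rcases l with _ | ⟨e, _ | ⟨e', l⟩⟩ <;> simp [vtxOp_apply, planeVec, listSrc, hw _]

theorem edgOp_planeVec (hw : IsSink s w) (hf : r f = w) :
    edgOp s r w K f (planeVec s r w K f x y) = planeVec s r w K f y 0 := by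
  ext ⟨l, hl⟩
  rcases l with _ | ⟨e, _ | ⟨e', l⟩⟩
  · simp [edgOp_nil, planeVec]
  · simp [edgOp_cons, planeVec]
  · have : e = f → e' ≠ f := by
      rintro rfl rfl
      exact hw _ (hl.1.trans hf)
    simp only [edgOp_cons, planeVec]
    grind

theorem ghOp_planeVec (hf : r f = w) :
    ghOp s r w K f (planeVec s r w K f x y) = planeVec s r w K f 0 x := by
  ext ⟨l, hl⟩
  rcases l with _ | ⟨e, l⟩
  · simp [ghOp_apply, planeVec, listSrc, hf]
  · simp [ghOp_apply, planeVec]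

end repr

/-! ### Relations in the Leavitt path algebra -/

section rels

variable (K : Type*) [Field K] {V E : Type*} (s r : E → V)

theorem mk_eq {a b : FreeAlgebra K (Gen V E)} (h : CohnRel K s r a b) :
    RingQuot.mkAlgHom K (LeavittRel K s r) a = RingQuot.mkAlgHom K (LeavittRel K s r) b :=
  RingQuot.mkAlgHom_rel K (.cohn h)

theorem vtx_mul_self (v : V) : vtx K s r v * vtx K s r v = vtx K s r v := by
  simpa [vtx] using mk_eq K s r (.vtx_mul v v)

theorem vtx_mul_of_ne {v v' : V} (h : v ≠ v') : vtx K s r v * vtx K s r v' = 0 := by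
  simpa [vtx, h] using mk_eq K s r (.vtx_mul v v')

theorem src_mul_edg (e : E) : vtx K s r (s e) * edg K s r e = edg K s r e := by
  simpa [vtx, edg] using mk_eq K s r (.edge_src e)

theorem edg_mul_rng (e : E) : edg K s r e * vtx K s r (r e) = edg K s r e := by
  simpa [vtx, edg] using mk_eq K s r (.edge_rng e)

theorem rng_mul_gh (e : E) : vtx K s r (r e) * gh K s r e = gh K s r e := by
  simpa [vtx, gh] using mk_eq K s r (.ghost_rng e)

theorem gh_mul_src (e : E) : gh K s r e * vtx K s r (s e) = gh K s r e := by
  simpa [vtx, gh] using mk_eq K s r (.ghost_src e)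

end rels

/-- The elements with parameter `β` are units for every `β ≠ 0`, and act on the plane spanned by the
paths `f` and `w` by `[[β, 0], [α, β⁻¹]]` and `[[β, α], [0, β⁻¹]]`. For `β = 1` they are
`1 + α f^*` and `1 + α f`. -/
theorem exists_units.{a, b, c} (K : Type a) [Field K] {V : Type b} {E : Type c} (s r : E → V) (w : V) (hw : IsSink s w)
    (f : E) (hf : r f = w) (α β : K) (hβ : β ≠ 0) :
    ∃ uc ud : (LeavittPathAlgebra K s r)ˣ,
      (uc : LeavittPathAlgebra K s r) =
          1 + algebraMap K (LeavittPathAlgebra K s r) α * gh K s r f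
            + algebraMap K (LeavittPathAlgebra K s r) (β - 1) * vtx K s r (s f)
            + algebraMap K (LeavittPathAlgebra K s r) (β⁻¹ - 1) * vtx K s r (r f) ∧
      (ud : LeavittPathAlgebra K s r) =
          1 + algebraMap K (LeavittPathAlgebra K s r) α * edg K s r f
            + algebraMap K (LeavittPathAlgebra K s r) (β - 1) * vtx K s r (s f)
            + algebraMap K (LeavittPathAlgebra K s r) (β⁻¹ - 1) * vtx K s r (r f) ∧
      ∃ (M : Type (max a c)) (_ : MulAction (LeavittPathAlgebra K s r)ˣ M) (v : K → K → M),
        (∀ x y x' y', v x y = v x' y' → x = x' ∧ y = y') ∧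
        (∀ x y, uc • v x y = v (β * x) (β⁻¹ * y + α * x)) ∧
        (∀ x y, ud • v x y = v (β * x + α * y) (β⁻¹ * y)) := by
  have hsr : s f ≠ r f := fun h => hw f (h.trans hf)
  obtain ⟨uc, hc⟩ := exists_unit_of_peirce α β hβ (gh K s r f) (vtx K s r (s f)) (vtx K s r (r f))
    (vtx_mul_self ..) (vtx_mul_self ..) (vtx_mul_of_ne _ _ _ hsr) (vtx_mul_of_ne _ _ _ hsr.symm)
    (rng_mul_gh ..) (gh_mul_src ..)
  -- the edge lies in the opposite corner, so the two vertices, and `β` and `β⁻¹`, trade places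
  obtain ⟨ud, hd⟩ := exists_unit_of_peirce α β⁻¹ (inv_ne_zero hβ) (edg K s r f) (vtx K s r (r f))
    (vtx K s r (s f)) (vtx_mul_self ..) (vtx_mul_self ..) (vtx_mul_of_ne _ _ _ hsr.symm)
    (vtx_mul_of_ne _ _ _ hsr) (src_mul_edg ..) (edg_mul_rng ..)
  rw [inv_inv, add_right_comm] at hd
  refine ⟨uc, ud, hc, hd, PathTo s r w → K,
    MulAction.compHom _ (Units.map (pathRep s r w K hw : _ →* Module.End K (PathTo s r w → K))),
    planeVec s r w K f, fun x y x' y' => planeVec_inj s r w K f x y hf x' y', ?_, ?_⟩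
  · intro x y
    change pathRep s r w K hw (uc : LeavittPathAlgebra K s r) (planeVec s r w K f x y) = _
    simp only [hc, ← Algebra.smul_def, map_add, map_one, map_smul, pathRep_vtx, pathRep_gh, hf,
      LinearMap.add_apply, LinearMap.smul_apply, Module.End.one_apply,
      vtxOp_src_planeVec s r w K f x y hw, vtxOp_rng_planeVec s r w K f x y hw,
      ghOp_planeVec s r w K f x y hf, planeVec_smul, planeVec_add]
    congr 1 <;> ring
  · intro x y
    change pathRep s r w K hw (ud : LeavittPathAlgebra K s r) (planeVec s r w K f x y) = _
    simp only [hd, ← Algebra.smul_def, map_add, map_one, map_smul, pathRep_vtx, pathRep_edg, hf,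
      LinearMap.add_apply, LinearMap.smul_apply, Module.End.one_apply,
      vtxOp_src_planeVec s r w K f x y hw, vtxOp_rng_planeVec s r w K f x y hw,
      edgOp_planeVec s r w K f x y hw hf, planeVec_smul, planeVec_add]
    congr 1 <;> ring

end LPA

/-! ### Transcendence over the prime field and conclusion -/

theorem TranscendentalOverPrime.transcendental_rat {K : Type*} [Field K] [CharZero K] {α : K}
    (h : TranscendentalOverPrime K α) : Transcendental ℚ α := by
  rw [Transcendental, ← IsFractionRing.isAlgebraic_iff ℤ ℚ K]
  rintro ⟨p, hp, e⟩
  exact hp (Polynomial.map_injective _ Int.cast_injective ((h p e).trans (Polynomial.map_zero _).symm))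

theorem AlgIndepOverPrime.algebraicIndependent {K : Type*} [Field K] (t : ℕ) [CharP K t]
    [Fact t.Prime] [Algebra (ZMod t) K] {α β : K} (h : AlgIndepOverPrime K α β) :
    AlgebraicIndependent (ZMod t) ![α, β] := by
  rw [algebraicIndependent_iff]
  intro p hp
  obtain ⟨p, rfl⟩ := MvPolynomial.map_surjective (Int.castRingHom (ZMod t))
    ZMod.intCast_surjective p
  have e : (algebraMap (ZMod t) K).comp (Int.castRingHom (ZMod t)) = Int.castRingHom K :=
    RingHom.ext_int _ _
  have hp' : MvPolynomial.aeval ![α, β] p = 0 := by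
    rw [← hp, MvPolynomial.aeval_def, MvPolynomial.aeval_def, MvPolynomial.eval₂_map]
    congr 1
    exact RingHom.ext_int _ _
  apply MvPolynomial.map_injective _ (algebraMap (ZMod t) K).injective
  rw [MvPolynomial.map_map, e, h p hp', map_zero]

/-- a sink `w` together with an edge `f` into it produces non-cyclic free
subgroups of units of the Leavitt path algebra. -/
theorem stmt9 (K V E : Type*) [Field K] [Fintype V] (s r : E → V)
    (hK : ¬ IsAbsoluteField K)
    (w : V) (hw : LPA.IsSink s w) (f : E) (hf : r f = w) :
    LPA.FreeSubgroupFromEdge K s r f := by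
  refine fun α β => ⟨fun h0 hα => ?_, fun t ht hchar hαβ => ?_⟩
  · have := CharP.charP_to_charZero K
    obtain ⟨ua, ub, ha, hb, M, _, v, hv, hva, hvb⟩ :=
      LPA.exists_units K s r w hw f hf α 1 one_ne_zero
    refine ⟨ua, ub, by simpa using ha, by simpa using hb, ?_⟩
    simp only [inv_one, one_mul] at hva hvb
    rcases hα with rfl | hα
    · exact freePair_of_two v hv ua ub hva hvb
    · exact freePair_of_transcendental (k := ℚ) v hv α hα.transcendental_rat 1 one_ne_zero
        (fun n => n) (by simp) (by simp) (by simp) (by simp) ua ub (by simpa using hva)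
        (by simpa using hvb)
  · have : Fact t.Prime := ⟨(CharP.char_is_prime_or_zero K t).resolve_right ht.ne'⟩
    let _ := ZMod.algebra K t
    have hind := hαβ.algebraicIndependent t
    have hβt : Transcendental (ZMod t) β := hind.transcendental 1
    have hα : Transcendental (IntermediateField.adjoin (ZMod t) {β}) α := by
      rw [IntermediateField.transcendental_adjoin_iff]
      have h := hind.transcendental_adjoin (s := {1}) (i := 0) (by simp)
      rw [Set.image_singleton] at h
      exact h
    have hβ : β ≠ 0 := by
      rintro rfl
      exact hβt isAlgebraic_zero
    let b := IntermediateField.AdjoinSimple.gen (ZMod t) β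
    have hbmap : algebraMap (IntermediateField.adjoin (ZMod t) {β}) K b = β := rfl
    have hb : b ≠ 0 := fun h => hβ (by rw [← hbmap, h, map_zero])
    have hroot : ∀ n : ℤ, n ≠ 0 → b ^ n ≠ 1 := by
      intro n hn h
      have hm : b ^ n.natAbs = 1 := by
        rcases Int.natAbs_eq n with e | e <;> rw [e] at h
        · exact_mod_cast h
        · rw [zpow_neg, inv_eq_one] at h
          exact_mod_cast h
      have hm' : β ^ n.natAbs = 1 := by rw [← hbmap, ← map_pow, hm, map_one]
      exact hβt (IsAlgebraic.of_pow (Int.natAbs_pos.2 hn) (by rw [hm']; exact isAlgebraic_one))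
    have hpow : ∀ n : ℤ, n ≠ 0 → b ^ n - (b ^ n)⁻¹ ≠ 0 := by
      intro n hn h
      refine hroot (n + n) (by omega) ?_
      rw [zpow_add₀ hb]
      nth_rw 2 [sub_eq_zero.1 h]
      exact mul_inv_cancel₀ (zpow_ne_zero _ hb)
    have hden : b - b⁻¹ ≠ 0 := by simpa using hpow 1 one_ne_zero
    obtain ⟨uc, ud, hc, hd, M, _, v, hv, hvc, hvd⟩ := LPA.exists_units K s r w hw f hf α β hβ
    refine ⟨uc, ud, hc, hd, ?_⟩
    refine freePair_of_transcendental v hv α hα b hb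
      (fun n => (b ^ n - (b ^ n)⁻¹) / (b - b⁻¹)) (by simp)
      (fun n hn => div_ne_zero (hpow n hn) hden) ?_ ?_ uc ud hvc hvd
    · intro n
      have := zpow_ne_zero n hb
      rw [div_eq_iff hden, add_mul, mul_assoc, div_mul_cancel₀ _ hden, zpow_add₀ hb, zpow_one]
      field_simp
      ring
    · intro n
      have := zpow_ne_zero n hb
      rw [div_eq_iff hden, add_mul, mul_assoc, div_mul_cancel₀ _ hden, zpow_add₀ hb, zpow_one]
      field_simp
      ring
end
end
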